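/- arXiv:2509.22142 — 5 statements merged into one kernel-verified Lean document; each statement's English description precedes it below -/
import Mathlib

section
/- Let P ⊆ ℤ^n_{≥0} be a polymatroid over [n] with rank function f. Then for every integer i with 0 ≤ i < r_2(P), the coefficient of y^i in the exterior polynomial satisfies [y^i]X_P(y) = C(f([n])+i-1, i) − Σ_{j=0}^{i} C(f([n])+i-1-j, i-j)·|H_j(P)|, where C(·,·) denotes the binomial coefficient. -/
open Finset Polynomial

/-- `f` is the rank function of a polymatroid over the ground set `[n]` (encoded as `Fin n`):
normalization, monotonicity and submodularity. -/
def IsPolymatroidRank (n : ℕ) (f : Finset (Fin n) → ℕ) : Prop :=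
  f ∅ = 0 ∧ (∀ I J : Finset (Fin n), I ⊆ J → f I ≤ f J) ∧
    ∀ I J : Finset (Fin n), f (I ∪ J) + f (I ∩ J) ≤ f I + f J

/-- The set of bases of the polymatroid `P ⊆ ℤ^n_{≥0}` with rank function `f`:
all nonnegative integer vectors `a` with `∑_{i ∈ I} a i ≤ f I` for every `I ⊆ [n]`
and `∑_{i ∈ [n]} a i = f [n]`.  (Every such vector has entries `≤ f [n]`, whence the
bounding box used to produce a `Finset`.) -/
def polyBases (n : ℕ) (f : Finset (Fin n) → ℕ) : Finset (Fin n → ℤ) :=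
  ((Finset.univ : Finset (Fin n → Fin (f Finset.univ + 1))).image
      (fun a i => ((a i : ℕ) : ℤ))).filter
    fun a => (∀ i, 0 ≤ a i) ∧ (∀ I : Finset (Fin n), ∑ i ∈ I, a i ≤ (f I : ℤ)) ∧
      ∑ i, a i = (f Finset.univ : ℤ)

/-- The externally active indices of a basis `a`: those `i` such that
`a + e_i - e_j ∉ P` for every `j < i`. -/
def extAct (n : ℕ) (f : Finset (Fin n) → ℕ) (a : Fin n → ℤ) : Finset (Fin n) :=
  Finset.univ.filter fun i => ∀ j, j < i →
    (fun t => a t + (if t = i then 1 else 0) - (if t = j then 1 else 0)) ∉ polyBases n f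

/-- The internally active indices of a basis `a`: those `i` such that
`a - e_i + e_j ∉ P` for every `j < i`. -/
def intAct (n : ℕ) (f : Finset (Fin n) → ℕ) (a : Fin n → ℤ) : Finset (Fin n) :=
  Finset.univ.filter fun i => ∀ j, j < i →
    (fun t => a t - (if t = i then 1 else 0) + (if t = j then 1 else 0)) ∉ polyBases n f

/-- The exterior polynomial `X_P(y) = ∑_{a ∈ P} y^(n - |Ext(a)|)`. -/
noncomputable def exteriorPoly (n : ℕ) (f : Finset (Fin n) → ℕ) : Polynomial ℤ :=
  ∑ a ∈ polyBases n f, X ^ (n - (extAct n f a).card)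

/-- The interior polynomial `I_P(x) = ∑_{a ∈ P} x^(n - |Int(a)|)`. -/
noncomputable def interiorPoly (n : ℕ) (f : Finset (Fin n) → ℕ) : Polynomial ℤ :=
  ∑ a ∈ polyBases n f, X ^ (n - (intAct n f a).card)

/-- `r_k(P) = min { n - |F| : F ⊆ [n], f F ≤ f [n] - k }` (junk value `0` if no such `F`). -/
noncomputable def rk (n : ℕ) (f : Finset (Fin n) → ℕ) (k : ℕ) : ℕ :=
  sInf {m | ∃ F : Finset (Fin n), (f F : ℤ) ≤ (f Finset.univ : ℤ) - k ∧ m = n - F.card}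

/-- `r'_k(P) = min { |F| : F ⊆ [n], ∑_{i ∈ F} f {i} - f F ≥ k }` (junk value `0` if no such `F`). -/
noncomputable def rk' (n : ℕ) (f : Finset (Fin n) → ℕ) (k : ℕ) : ℕ :=
  sInf {m | ∃ F : Finset (Fin n), (k : ℤ) ≤ (∑ i ∈ F, (f {i} : ℤ)) - (f F : ℤ) ∧ m = F.card}

/-- `H_j(P)`: the flats `H` (i.e. `f (H ∪ {e}) > f H` for all `e ∉ H`) with
`f H = f [n] - 1` and `n - |H| = j`. -/
def Hset (n : ℕ) (f : Finset (Fin n) → ℕ) (j : ℕ) : Finset (Finset (Fin n)) :=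
  Finset.univ.filter fun H =>
    (∀ e, e ∉ H → f H < f (insert e H)) ∧ (f H : ℤ) = (f Finset.univ : ℤ) - 1 ∧
      n - H.card = j

/-- `C_j(P)`: the sets `C` with `|C| = j`, `∑_{i ∈ C} f {i} - f C = 1` and
`∑_{i ∈ C \ {j'}} f {i} = f (C \ {j'})` for every `j' ∈ C`. -/
def Cset (n : ℕ) (f : Finset (Fin n) → ℕ) (j : ℕ) : Finset (Finset (Fin n)) :=
  Finset.univ.filter fun C => C.card = j ∧
    (∑ i ∈ C, (f {i} : ℤ)) - (f C : ℤ) = 1 ∧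
    ∀ j' ∈ C, (∑ i ∈ C.erase j', (f {i} : ℤ)) = (f (C.erase j') : ℤ)

/-- The dual rank function `f*(I) = f([n] \ I) - f([n]) + ∑_{i ∈ I} f {i}`
(the subtraction is exact for a polymatroid rank function). -/
def fdual (n : ℕ) (f : Finset (Fin n) → ℕ) : Finset (Fin n) → ℕ :=
  fun I => f (Finset.univ \ I) + (∑ i ∈ I, f {i}) - f Finset.univ


/-- hockey-stick convolution -/
lemma conv_aux (d K : ℕ) : ∀ n, ∑ e ∈ range (n+1), (d + e).choose e * (n - e + K).choose (n - e)
    = (n + (d+1) + K).choose n := by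
  induction d with
  | zero =>
    intro n
    induction n with
    | zero => simp
    | succ n ih =>
      rw [Finset.sum_range_succ']
      have : ∀ k ∈ range (n+1), (0 + (k+1)).choose (k+1) * (n+1-(k+1)+K).choose (n+1-(k+1))
        = (0 + k).choose k * (n - k + K).choose (n - k) := by
        intro k hk; simp
      rw [Finset.sum_congr rfl this, ih]
      have := Nat.choose_succ_succ (n + 1 + K) n
      simp only [Nat.sub_zero, zero_add] at *
      rw [show n + 1 + 1 + K = n + 1 + K + 1 by ring]
      simp only [Nat.succ_eq_add_one] at *
      simp_all
  | succ d ihd =>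
    intro n
    induction n with
    | zero => simp
    | succ n ih =>
      -- C(d+1+e,e) = C(d+e,e) + C(d+1+e-1,e-1)
      have h1 : ∑ e ∈ range (n+1+1), (d + 1 + e).choose e * (n + 1 - e + K).choose (n + 1 - e)
          = ∑ e ∈ range (n+1+1), (d + e).choose e * (n + 1 - e + K).choose (n + 1 - e)
          + ∑ e ∈ range (n+1), (d + 1 + e).choose e * (n - e + K).choose (n - e) := by
        rw [Finset.sum_range_succ', Finset.sum_range_succ' _ (n+1)]
        have : ∀ k ∈ range (n+1), (d + 1 + (k+1)).choose (k+1) * (n+1-(k+1)+K).choose (n+1-(k+1))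
          = (d + (k+1)).choose (k+1) * (n+1-(k+1)+K).choose (n+1-(k+1)) +
            (d + 1 + k).choose k * (n - k + K).choose (n - k) := by
          intro k hk
          have := Nat.choose_succ_succ (d + 1 + k) k
          rw [show d + 1 + (k+1) = (d+1+k).succ by omega, this, show d + (k+1) = d+1+k by ring]
          simp only [Nat.add_sub_add_right]
          ring
        rw [Finset.sum_congr rfl this, Finset.sum_add_distrib]
        simp only [Nat.choose_zero_right]
        ring
      rw [h1, ihd, ih]
      have := Nat.choose_succ_succ (n + (d+1+1) + K) n
      rw [show n + 1 + (d+1+1) + K = (n + (d+1+1)+K).succ by omega, this,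
        show n + 1 + (d+1) + K = n + (d+1+1) + K by ring]
      ring

lemma choose_up (m K : ℕ) : (m + K).choose m ≤ (K+1)^m := by
  induction m with
  | zero => simp
  | succ m ih =>
    have h := Nat.add_one_mul_choose_eq (m+K) m
    have h2 : (m+1+K).choose (m+1) * (m+1) = (m+K+1) * (m+K).choose m := by
      rw [h]; congr 2; ring
    have : (m+1+K).choose (m+1) * (m+1) ≤ (K+1)^(m+1) * (m+1) := by
      rw [h2, pow_succ]
      calc (m+K+1) * (m+K).choose m ≤ ((K+1)*(m+1)) * (K+1)^m := by
            apply Nat.mul_le_mul _ ih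
            nlinarith
        _ = _ := by ring
    exact Nat.le_of_mul_le_mul_right this (by omega)

lemma choose_lo (m K : ℕ) : (K+1)^m ≤ (m + K).choose m * m.factorial := by
  have := Nat.pow_succ_le_ascFactorial (K+1) m
  rw [Nat.ascFactorial_eq_factorial_mul_choose] at this
  calc _ ≤ _ := this
    _ = _ := by rw [show K + m = m + K by ring]; ring

lemma asym (n i : ℕ) (hi : i < n) (z : ℕ → ℤ) (M : ℕ)
    (h : ∀ K : ℕ, |∑ e ∈ range (n+1), z e * ((n - e + K).choose (n - e) : ℤ)| ≤
      M * ((K:ℤ)+1)^(n-i-1)) : ∀ e, e ≤ i → z e = 0 := by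
  intro e
  induction e using Nat.strong_induction_on with
  | _ e ih =>
  intro he
  by_contra hz
  set M' : ℤ := M + ∑ e' ∈ (range (n+1)).erase e, |z e'| with hM'
  have hM0 : 0 ≤ M' := by positivity
  have key : ∀ K : ℕ, ((K:ℤ)+1) ≤ M' * (n-e).factorial := by
    intro K
    have h1 := h K
    rw [← Finset.add_sum_erase _ _ (show e ∈ range (n+1) by simp; omega)] at h1
    have h2 : |∑ e' ∈ (range (n+1)).erase e, z e' * ((n - e' + K).choose (n - e') : ℤ)|
        ≤ ∑ e' ∈ (range (n+1)).erase e, |z e'| * ((K:ℤ)+1)^(n-e-1) := by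
      refine (Finset.abs_sum_le_sum_abs _ _).trans (Finset.sum_le_sum ?_)
      intro e' he'
      simp only [mem_erase, mem_range] at he'
      rcases lt_or_gt_of_ne he'.1 with hl | hl
      · rw [ih e' hl (by omega)]; simp
      · rw [abs_mul]
        apply mul_le_mul_of_nonneg_left _ (abs_nonneg _)
        rw [abs_of_nonneg (by positivity)]
        calc ((n - e' + K).choose (n - e') : ℤ) ≤ ((K:ℤ)+1)^(n-e') := by
              exact_mod_cast choose_up (n-e') K
          _ ≤ _ := pow_le_pow_right₀ (by omega) (by omega)
    rw [← Finset.sum_mul] at h2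
    have h3 : (M:ℤ) * ((K:ℤ)+1)^(n-i-1) ≤ M * ((K:ℤ)+1)^(n-e-1) := by
      apply mul_le_mul_of_nonneg_left _ (by positivity)
      exact pow_le_pow_right₀ (by omega) (by omega)
    have h4 : |z e * ((n - e + K).choose (n - e) : ℤ)| ≤ M' * ((K:ℤ)+1)^(n-e-1) := by
      rw [hM', add_mul]
      rw [abs_le] at *
      constructor <;> linarith [h1.1, h1.2, h2.1, h2.2]
    rw [abs_mul, abs_of_nonneg (a := ((n - e + K).choose (n - e) : ℤ)) (by positivity)] at h4
    have h5 : ((n - e + K).choose (n - e) : ℤ) ≤ M' * ((K:ℤ)+1)^(n-e-1) := by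
      refine le_trans ?_ h4
      have : 1 ≤ |z e| := Int.one_le_abs hz
      nlinarith [Nat.zero_le ((n - e + K).choose (n - e))]
    have h6 : ((K:ℤ)+1)^(n-e) ≤ ((n - e + K).choose (n - e) : ℤ) * (n-e).factorial := by
      exact_mod_cast choose_lo (n-e) K
    have h7 : ((K:ℤ)+1)^(n-e) = ((K:ℤ)+1) * ((K:ℤ)+1)^(n-e-1) := by
      rw [← pow_succ']; congr 1; omega
    have h8 : ((K:ℤ)+1) * ((K:ℤ)+1)^(n-e-1) ≤ (M' * (n-e).factorial) * ((K:ℤ)+1)^(n-e-1) := by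
      rw [← h7]
      refine h6.trans ?_
      have : (0:ℤ) ≤ (n-e).factorial := by positivity
      nlinarith
    exact le_of_mul_le_mul_right h8 (by positivity)
  have := key (M' * (n-e).factorial).toNat
  have h0 : 0 ≤ M' * ((n-e).factorial : ℤ) := by positivity
  rw [Int.toNat_of_nonneg h0] at this
  omega

def boxS (n : ℕ) (S : Finset (Fin n)) (N : ℕ) : Finset (Fin n → ℕ) :=
  (Fintype.piFinset fun _ => range (N+1)).filter fun c => ∑ t, c t ≤ N ∧ ∀ t, t ∉ S → c t = 0

lemma mem_boxS {n : ℕ} {S : Finset (Fin n)} {N : ℕ} {c : Fin n → ℕ} :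
    c ∈ boxS n S N ↔ ∑ t, c t ≤ N ∧ ∀ t, t ∉ S → c t = 0 := by
  unfold boxS
  simp only [mem_filter, Fintype.mem_piFinset, mem_range, and_iff_right_iff_imp]
  rintro ⟨h, -⟩ t
  have := Finset.single_le_sum (f := c) (fun _ _ => Nat.zero_le _) (mem_univ t)
  omega

lemma card_boxS (n : ℕ) (S : Finset (Fin n)) (N : ℕ) :
    (boxS n S N).card = (S.card + N).choose S.card := by
  have h1 : boxS n S N = (range (N+1)).biUnion (fun m =>
      (S.finsuppAntidiag m).map Finsupp.equivFunOnFinite.toEmbedding) := by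
    ext c
    simp only [mem_boxS, mem_biUnion, mem_range, mem_map, mem_finsuppAntidiag,
      Equiv.coe_toEmbedding]
    constructor
    · rintro ⟨h1, h2⟩
      refine ⟨∑ t, c t, by omega, Finsupp.equivFunOnFinite.symm c, ⟨?_, ?_⟩, by simp⟩
      · simp only [Finsupp.coe_equivFunOnFinite_symm]
        exact Finset.sum_subset (subset_univ _) (fun t _ ht => h2 t ht)
      · intro t ht
        by_contra h
        simp at ht
        exact ht (h2 t h)
    · rintro ⟨m, hm, g, ⟨h1, h2⟩, rfl⟩
      have h3 : ∀ t, t ∉ S → g t = 0 := by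
        intro t ht
        by_contra h
        exact ht (h2 (by simpa using h))
      refine ⟨?_, h3⟩
      simp only [Finsupp.equivFunOnFinite_apply]
      rw [← Finset.sum_subset (subset_univ S) (fun t _ ht => h3 t ht)]
      have h1' : ∑ x ∈ S, g x = m := h1
      omega
  rw [h1, card_biUnion]
  · simp only [card_map, Finset.card_finsuppAntidiag_nat_eq_choose]
    rcases Nat.eq_zero_or_pos S.card with h | h
    · rw [h, Finset.sum_range_succ']
      simp
    · obtain ⟨s, hs⟩ : ∃ s, S.card = s + 1 := ⟨S.card - 1, by omega⟩
      rw [hs]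
      have := Nat.sum_range_add_choose N s
      rw [show s + 1 + N = N + s + 1 by ring, ← this]
      apply Finset.sum_congr rfl
      intro m _
      rw [show s + 1 + m - 1 = m + s by omega]
      exact Nat.choose_symm_add
  · intro m _ m' _ hne
    rw [Function.onFun, Finset.disjoint_left]
    intro c hc hc'
    simp only [mem_map, mem_finsuppAntidiag, Equiv.coe_toEmbedding] at hc hc'
    obtain ⟨g, hg, rfl⟩ := hc
    obtain ⟨g', hg', h⟩ := hc'
    have := Finsupp.equivFunOnFinite.injective h
    subst this
    exact hne (hg.1.symm.trans hg'.1)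

lemma mem_polyBases {n : ℕ} {f : Finset (Fin n) → ℕ} {a : Fin n → ℤ} :
    a ∈ polyBases n f ↔ (∀ i, 0 ≤ a i) ∧ (∀ I : Finset (Fin n), ∑ i ∈ I, a i ≤ (f I : ℤ)) ∧
      ∑ i, a i = (f Finset.univ : ℤ) := by
  unfold polyBases
  simp only [mem_filter, mem_image, mem_univ, true_and, and_iff_right_iff_imp]
  rintro ⟨h0, h1, h2⟩
  have hb : ∀ i, a i ≤ f univ := by
    intro i
    rw [← h2]
    exact Finset.single_le_sum (f := a) (fun _ _ => h0 _) (mem_univ i)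
  refine ⟨fun i => ⟨(a i).toNat, by have := hb i; omega⟩, ?_⟩
  funext i
  simp [h0 i]

/-- Tight sets are closed under union and intersection. -/
lemma tight_ui {n : ℕ} {f : Finset (Fin n) → ℕ} (hf : IsPolymatroidRank n f) {a : Fin n → ℤ}
    (ha : ∀ I : Finset (Fin n), ∑ i ∈ I, a i ≤ (f I : ℤ)) {I J : Finset (Fin n)}
    (hI : ∑ i ∈ I, a i = (f I : ℤ)) (hJ : ∑ i ∈ J, a i = (f J : ℤ)) :
    ∑ i ∈ I ∪ J, a i = (f (I ∪ J) : ℤ) ∧ ∑ i ∈ I ∩ J, a i = (f (I ∩ J) : ℤ) := by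
  have h1 := hf.2.2 I J
  have h2 := Finset.sum_union_inter (s₁ := I) (s₂ := J) (f := a)
  have h3 := ha (I ∪ J)
  have h4 := ha (I ∩ J)
  have h1' : (f (I ∪ J) : ℤ) + f (I ∩ J) ≤ f I + f J := by exact_mod_cast h1
  constructor <;> linarith

lemma sum_exch {n : ℕ} (a : Fin n → ℤ) (i j : Fin n) (I : Finset (Fin n)) :
    ∑ t ∈ I, (a t + (if t = i then 1 else 0) - (if t = j then 1 else 0)) =
      ∑ t ∈ I, a t + (if i ∈ I then 1 else 0) - (if j ∈ I then 1 else 0) := by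
  rw [Finset.sum_sub_distrib, Finset.sum_add_distrib]
  simp

/-- Exchange property. -/
lemma exch {n : ℕ} {f : Finset (Fin n) → ℕ} (hf : IsPolymatroidRank n f) {a b : Fin n → ℤ}
    (ha : a ∈ polyBases n f) (hb : b ∈ polyBases n f) (i : Fin n) (hi : a i < b i) :
    ∃ j, b j < a j ∧
      (fun t => a t + (if t = i then 1 else 0) - (if t = j then 1 else 0)) ∈ polyBases n f := by
  rw [mem_polyBases] at ha hb
  obtain ⟨ha0, ha1, ha2⟩ := ha
  obtain ⟨hb0, hb1, hb2⟩ := hb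
  -- minimal tight set containing i
  obtain ⟨T, hT, hmin⟩ := Finset.exists_min_image
    ((univ : Finset (Finset (Fin n))).filter fun T => i ∈ T ∧ ∑ t ∈ T, a t = (f T : ℤ)) card
    ⟨univ, by simp [ha2]⟩
  simp only [mem_filter, mem_univ, true_and] at hT hmin
  have hj : ∃ j ∈ T, b j < a j := by
    by_contra h
    push Not at h
    have : ∑ t ∈ T, a t < ∑ t ∈ T, b t := Finset.sum_lt_sum h ⟨i, hT.1, hi⟩
    have := hb1 T
    linarith [hT.2]
  obtain ⟨j, hjT, hj⟩ := hj
  refine ⟨j, hj, ?_⟩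
  have hij : i ≠ j := by rintro rfl; omega
  rw [mem_polyBases]
  refine ⟨?_, ?_, ?_⟩
  · intro t
    have := ha0 t
    have := hb0 j
    by_cases h : t = j
    · subst h
      simp [Ne.symm hij]; omega
    · simp only [h, if_false]; split_ifs <;> omega
  · intro I
    rw [sum_exch]
    have h1 := ha1 I
    by_cases hiI : i ∈ I
    · by_cases hjI : j ∈ I
      · simp [hiI, hjI, h1]
      · have : ∑ t ∈ I, a t ≠ f I := by
          intro h
          have h2 := (tight_ui hf ha1 hT.2 h).2
          have h3 := hmin (T ∩ I) ⟨by simp [hiI, hT.1], h2⟩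
          have h4 : T ∩ I = T := Finset.eq_of_subset_of_card_le inter_subset_left h3
          have : j ∈ T ∩ I := by rw [h4]; exact hjT
          simp [hjI] at this
        simp only [hiI, hjI, if_true, if_false]
        omega
    · simp only [hiI, if_false]; split_ifs <;> omega
  · rw [sum_exch]; simp [ha2]

/-- Spanning vectors. -/
def isSpan (n : ℕ) (f : Finset (Fin n) → ℕ) (c : Fin n → ℕ) : Prop :=
  ∀ F : Finset (Fin n), f univ ≤ f F + ∑ t ∈ Fᶜ, c t

lemma span_of_ge {n : ℕ} {f : Finset (Fin n) → ℕ} {c : Fin n → ℕ} {a : Fin n → ℤ}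
    (ha : a ∈ polyBases n f) (hac : ∀ t, a t ≤ c t) : isSpan n f c := by
  intro F
  rw [mem_polyBases] at ha
  have h1 := ha.2.1 F
  have h2 := ha.2.2
  rw [← Finset.sum_add_sum_compl F] at h2
  have h3 : ∑ t ∈ Fᶜ, a t ≤ ∑ t ∈ Fᶜ, (c t : ℤ) := Finset.sum_le_sum fun t _ => hac t
  zify
  linarith

lemma exists_basis_le {n : ℕ} {f : Finset (Fin n) → ℕ} (hf : IsPolymatroidRank n f)
    {c : Fin n → ℕ} (hc : isSpan n f c) : ∃ a ∈ polyBases n f, ∀ t, a t ≤ c t := by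
  obtain ⟨a, ha, hmax⟩ := Finset.exists_max_image
    ((Fintype.piFinset fun t => Finset.Icc (0:ℤ) (c t)).filter
      fun a => ∀ I : Finset (Fin n), ∑ i ∈ I, a i ≤ (f I : ℤ)) (fun a => ∑ t, a t)
    ⟨0, by simp⟩
  simp only [mem_filter, Fintype.mem_piFinset, mem_Icc] at ha hmax
  obtain ⟨hb, ha1⟩ := ha
  refine ⟨a, mem_polyBases.2 ⟨fun t => (hb t).1, ha1, ?_⟩, fun t => (hb t).2⟩
  -- every unsaturated coordinate lies in a tight set
  have hts : ∀ t, a t < c t → ∃ T : Finset (Fin n), t ∈ T ∧ ∑ s ∈ T, a s = f T := by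
    intro t ht
    by_contra h
    push Not at h
    have := hmax (fun s => a s + if s = t then 1 else 0) ⟨?_, ?_⟩
    · rw [Finset.sum_add_distrib] at this
      simp at this
    · intro s
      have := hb s
      by_cases hs : s = t
      · subst hs; simp; omega
      · simp only [hs, if_false]; omega
    · intro I
      rw [Finset.sum_add_distrib]
      have h1 := ha1 I
      by_cases htI : t ∈ I
      · have := h I htI
        simp [htI]; omega
      · simp [htI, h1]
  -- maximal tight set
  obtain ⟨T, hT, hTm⟩ := Finset.exists_max_image
    ((univ : Finset (Finset (Fin n))).filter fun T => ∑ t ∈ T, a t = (f T : ℤ)) card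
    ⟨∅, by simp [hf.1]⟩
  simp only [mem_filter, mem_univ, true_and] at hT hTm
  have hsat : ∀ t ∈ Tᶜ, a t = c t := by
    intro t ht
    by_contra h
    obtain ⟨T', ht', hT'⟩ := hts t (lt_of_le_of_ne (hb t).2 h)
    have h2 := hTm _ (tight_ui hf ha1 hT hT').1
    have h3 : T = T ∪ T' := Finset.eq_of_subset_of_card_le subset_union_left h2
    have : t ∈ T := by rw [h3]; simp [ht']
    simp [this] at ht
  have h1 := hc T
  have h2 : ∑ t, a t = f T + ∑ t ∈ Tᶜ, (c t : ℤ) := by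
    rw [← Finset.sum_add_sum_compl T, hT, Finset.sum_congr rfl hsat]
  have h3 := ha1 univ
  zify at h1
  linarith

/-- Unique decomposition of a spanning vector along the externally active elements. -/
lemma exists_unique_dec {n : ℕ} {f : Finset (Fin n) → ℕ} (hf : IsPolymatroidRank n f)
    {c : Fin n → ℕ} (hc : isSpan n f c) : ∃ a ∈ polyBases n f, (∀ t, a t ≤ c t) ∧
      ∀ t, t ∉ extAct n f a → (c t : ℤ) = a t := by
  obtain ⟨a0, ha0, hac0⟩ := exists_basis_le hf hc
  -- maximal with respect to the reverse lexicographic order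
  obtain ⟨a, ha, hmax⟩ := Finset.exists_max_image
    ((polyBases n f).filter fun a => ∀ t, a t ≤ (c t : ℤ))
    (fun a => (toLex (fun t : (Fin n)ᵒᵈ => a (OrderDual.ofDual t)) : Lex ((Fin n)ᵒᵈ → ℤ)))
    ⟨a0, by simp [ha0, hac0]⟩
  simp only [mem_filter] at ha hmax
  refine ⟨a, ha.1, ha.2, ?_⟩
  intro t ht
  by_contra hne
  have hlt : a t < c t := lt_of_le_of_ne (ha.2 t) (Ne.symm hne)
  simp only [extAct, mem_filter, mem_univ, true_and] at ht
  push Not at ht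
  obtain ⟨j, hj, hmem⟩ := ht
  have := hmax _ ⟨hmem, ?_⟩
  · refine absurd this (not_le.2 ?_)
    refine ⟨OrderDual.toDual t, ?_, ?_⟩
    · intro s hs
      have hs' : t < OrderDual.ofDual s := hs
      have h1 : OrderDual.ofDual s ≠ t := ne_of_gt hs'
      have h2 : OrderDual.ofDual s ≠ j := ne_of_gt (hj.trans hs')
      simp [h1, h2]
    · have : t ≠ j := ne_of_gt hj
      simp [this]
  · intro s
    have := ha.2 s
    by_cases h : s = t
    · subst h; simp only [if_true]; split_ifs <;> omega
    · simp only [h, if_false]; split_ifs <;> omega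

lemma unique_dec {n : ℕ} {f : Finset (Fin n) → ℕ} (hf : IsPolymatroidRank n f)
    {c : Fin n → ℕ} {a b : Fin n → ℤ} (ha : a ∈ polyBases n f) (hb : b ∈ polyBases n f)
    (hac : ∀ t, a t ≤ c t) (hbc : ∀ t, b t ≤ c t)
    (hae : ∀ t, t ∉ extAct n f a → (c t : ℤ) = a t)
    (hbe : ∀ t, t ∉ extAct n f b → (c t : ℤ) = b t) : a = b := by
  by_contra hne
  have hd : (univ.filter fun t => a t ≠ b t).Nonempty := by
    by_contra h
    rw [Finset.not_nonempty_iff_eq_empty, Finset.filter_eq_empty_iff] at h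
    exact hne (funext fun t => by simpa using h (mem_univ t))
  set m := (univ.filter fun t => a t ≠ b t).max' hd with hm
  have hm1 : a m ≠ b m := by
    have := Finset.max'_mem _ hd
    rw [← hm] at this
    simpa using this
  have hm2 : ∀ j, a j ≠ b j → j ≠ m → j < m := by
    intro j hj hjm
    exact lt_of_le_of_ne (Finset.le_max' _ j (by simpa using hj)) hjm
  rcases lt_or_gt_of_ne hm1 with h | h
  · obtain ⟨j, hj, hmem⟩ := exch hf ha hb m h
    have h1 : m ∈ extAct n f a := by
      by_contra hh
      have := hae m hh
      have := hbc m
      omega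
    simp only [extAct, mem_filter, mem_univ, true_and] at h1
    exact h1 j (hm2 j (by omega) (by rintro rfl; omega)) hmem
  · obtain ⟨j, hj, hmem⟩ := exch hf hb ha m h
    have h1 : m ∈ extAct n f b := by
      by_contra hh
      have := hbe m hh
      have := hac m
      omega
    simp only [extAct, mem_filter, mem_univ, true_and] at h1
    exact h1 j (hm2 j (by omega) (by rintro rfl; omega)) hmem

open Classical in
lemma span_count {n : ℕ} {f : Finset (Fin n) → ℕ} (hf : IsPolymatroidRank n f) (K : ℕ) :
    ((boxS n univ (f univ + K)).filter (isSpan n f)).card =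
      ∑ a ∈ polyBases n f, ((extAct n f a).card + K).choose (extAct n f a).card := by
  have h1 : (boxS n univ (f univ + K)).filter (isSpan n f) = (polyBases n f).biUnion fun a =>
      (boxS n (extAct n f a) K).image fun b t => (a t).toNat + b t := by
    ext c
    simp only [mem_filter, mem_biUnion, mem_image, mem_boxS]
    constructor
    · rintro ⟨⟨hc1, -⟩, hc⟩
      obtain ⟨a, ha, hac, hae⟩ := exists_unique_dec hf hc
      have hP := mem_polyBases.1 ha
      refine ⟨a, ha, fun t => c t - (a t).toNat, ⟨?_, ?_⟩, ?_⟩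
      · have h2 : ∑ t, (((c t - (a t).toNat : ℕ)) : ℤ) = ∑ t, ((c t : ℤ) - a t) := by
          apply Finset.sum_congr rfl
          intro t _
          have := hac t
          have := hP.1 t
          omega
        rw [Finset.sum_sub_distrib, hP.2.2] at h2
        zify at hc1 ⊢
        linarith
      · intro t ht
        have := hae t ht
        show c t - (a t).toNat = 0
        omega
      · funext t
        have := hac t
        have := hP.1 t
        show (a t).toNat + (c t - (a t).toNat) = c t
        omega
    · rintro ⟨a, ha, b, ⟨hb1, hb2⟩, rfl⟩
      have hP := mem_polyBases.1 ha
      refine ⟨⟨?_, by simp⟩, span_of_ge ha ?_⟩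
      · rw [Finset.sum_add_distrib]
        have : ∑ t, ((a t).toNat : ℤ) = f univ := by
          rw [← hP.2.2]
          exact Finset.sum_congr rfl fun t _ => Int.toNat_of_nonneg (hP.1 t)
        have : ∑ t, (a t).toNat = f univ := by exact_mod_cast this
        omega
      · intro t
        have := hP.1 t
        push_cast
        omega
  rw [h1, card_biUnion]
  · apply Finset.sum_congr rfl
    intro a _
    rw [card_image_of_injective, card_boxS]
    intro b b' h
    funext t
    have := congrFun h t
    simp only at this
    omega
  · intro a ha a' ha' hne
    rw [Function.onFun, Finset.disjoint_left]
    intro c hc hc'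
    simp only [mem_image, mem_boxS] at hc hc'
    obtain ⟨b, hb, rfl⟩ := hc
    obtain ⟨b', hb', h⟩ := hc'
    have h' : ∀ t, (a' t).toNat + b' t = (a t).toNat + b t := fun t => congrFun h t
    have hP := mem_polyBases.1 ha
    have hP' := mem_polyBases.1 ha'
    refine hne (unique_dec hf (c := fun t => (a t).toNat + b t) ha ha' ?_ ?_ ?_ ?_)
    · intro t; have := hP.1 t; push_cast; omega
    · intro t; have := hP'.1 t; have := h' t; omega
    · intro t ht; have := hP.1 t; have := hb.2 t ht; push_cast; omega
    · intro t ht; have := hP'.1 t; have := hb'.2 t ht; have := h' t; omega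

def Bad (n d m N : ℕ) : Finset (Fin n → ℕ) :=
  ((univ : Finset (Finset (Fin n))).filter fun F => F.card ≤ m).biUnion fun F =>
    Fintype.piFinset fun t => if t ∈ F then range (N+1) else range (d+1)

lemma card_Bad (n d m K : ℕ) :
    (Bad n d m (d + K)).card ≤ 2^n * ((d+1)^n * ((d+1)^m * (K+1)^m)) := by
  unfold Bad
  refine card_biUnion_le.trans ?_
  have h : ∀ F ∈ (univ : Finset (Finset (Fin n))).filter (fun F => F.card ≤ m),
      (Fintype.piFinset fun t => if t ∈ F then range (d+K+1) else range (d+1)).card ≤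
        (d+1)^n * ((d+1)^m * (K+1)^m) := by
    intro F hF
    simp only [mem_filter, mem_univ, true_and] at hF
    rw [Fintype.card_piFinset]
    have h1 : ∀ t, (if t ∈ F then range (d+K+1) else range (d+1)).card ≤
        (d+1) * (if t ∈ F then (d+1)*(K+1) else 1) := by
      intro t
      split_ifs
      · simp only [card_range]; nlinarith [Nat.zero_le (d*K), Nat.zero_le (d*(d*K))]
      · simp
    refine (Finset.prod_le_prod' fun t _ => h1 t).trans ?_
    rw [Finset.prod_mul_distrib, Finset.prod_ite]
    simp only [prod_const, card_univ, Fintype.card_fin, one_pow, mul_one, Finset.filter_univ_mem]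
    rw [← mul_pow]
    apply Nat.mul_le_mul_left
    exact Nat.pow_le_pow_right (by positivity) hF
  refine (Finset.sum_le_card_nsmul _ _ _ h).trans ?_
  rw [smul_eq_mul]
  apply Nat.mul_le_mul_right
  refine (card_filter_le _ _).trans ?_
  simp

def Hall (n : ℕ) (f : Finset (Fin n) → ℕ) (i : ℕ) : Finset (Finset (Fin n)) :=
  (range (i+1)).biUnion (Hset n f)

lemma mem_Hall {n : ℕ} {f : Finset (Fin n) → ℕ} {i : ℕ} {H : Finset (Fin n)} :
    H ∈ Hall n f i ↔ (∀ e, e ∉ H → f H < f (insert e H)) ∧ (f H : ℤ) = (f Finset.univ : ℤ) - 1 ∧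
      n - H.card ≤ i := by
  simp only [Hall, Hset, mem_biUnion, mem_filter, mem_univ, true_and, mem_range]
  constructor
  · rintro ⟨j, hj, h1, h2, h3⟩; exact ⟨h1, h2, by omega⟩
  · rintro ⟨h1, h2, h3⟩; exact ⟨_, by omega, h1, h2, rfl⟩

lemma sum_Hall {n : ℕ} {f : Finset (Fin n) → ℕ} {i : ℕ} (N : ℕ) :
    ∑ H ∈ Hall n f i, (boxS n H N).card =
      ∑ j ∈ range (i+1), (Hset n f j).card * (n - j + N).choose (n - j) := by
  unfold Hall
  rw [Finset.sum_biUnion]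
  · apply Finset.sum_congr rfl
    intro j _
    rw [Finset.sum_congr rfl (g := fun _ => (n - j + N).choose (n - j))]
    · simp
    · intro H hH
      simp only [Hset, mem_filter, mem_univ, true_and] at hH
      have : H.card = n - j := by
        have := card_le_univ H
        simp at this
        omega
      rw [card_boxS, this]
  · intro j _ j' _ hne
    rw [Function.onFun, Finset.disjoint_left]
    intro H h h'
    simp only [Hset, mem_filter, mem_univ, true_and] at h h'
    omega

lemma mem_Bad {n d m N : ℕ} {c : Fin n → ℕ} (hc : c ∈ boxS n univ N) (F : Finset (Fin n))
    (hF : F.card ≤ m) (h : ∀ t, t ∉ F → c t ≤ d) : c ∈ Bad n d m N := by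
  simp only [Bad, mem_biUnion, mem_filter, mem_univ, true_and, Fintype.mem_piFinset]
  refine ⟨F, hF, fun t => ?_⟩
  have := Finset.single_le_sum (f := c) (fun _ _ => Nat.zero_le _) (mem_univ t)
  have := (mem_boxS.1 hc).1
  split_ifs with ht
  · simp; omega
  · have := h t ht; simp; omega

open Classical in
lemma pointwise {n : ℕ} {f : Finset (Fin n) → ℕ} (hf : IsPolymatroidRank n f) {i : ℕ}
    (hi : ∀ F : Finset (Fin n), f F + 2 ≤ f univ → i < n - F.card)
    {N : ℕ} {c : Fin n → ℕ} (hc : c ∈ boxS n univ N) :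
    |(if isSpan n f c then (0:ℤ) else 1) -
      (((Hall n f i).filter fun H => ∀ t, t ∉ H → c t = 0).card : ℤ)| ≤
        if c ∈ Bad n (f univ) (n-i-1) N then 2^n else 0 := by
  split_ifs with hs hb hb
  · have : ((Hall n f i).filter fun H => ∀ t, t ∉ H → c t = 0).card ≤ 2^n := by
      refine (card_le_univ _).trans ?_
      simp
    generalize ((Hall n f i).filter fun H => ∀ t, t ∉ H → c t = 0).card = m at this ⊢
    zify at this
    rw [abs_le]; constructor <;> linarith
  · -- spanning: no H
    have : ((Hall n f i).filter fun H => ∀ t, t ∉ H → c t = 0) = ∅ := by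
      rw [Finset.filter_eq_empty_iff]
      intro H hH h
      rw [mem_Hall] at hH
      have h1 := hs H
      rw [Finset.sum_eq_zero (fun t ht => h t (by simpa using ht))] at h1
      omega
    rw [this]; simp
  · have : ((Hall n f i).filter fun H => ∀ t, t ∉ H → c t = 0).card ≤ 2^n := by
      refine (card_le_univ _).trans ?_
      simp
    have h1 : 1 ≤ 2^n := Nat.one_le_two_pow
    generalize ((Hall n f i).filter fun H => ∀ t, t ∉ H → c t = 0).card = m at this ⊢
    zify at this h1
    rw [abs_le]; constructor <;> linarith
  · have h1 : ((Hall n f i).filter fun H => ∀ t, t ∉ H → c t = 0).card = 1 := by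
      apply le_antisymm
      · rw [Finset.card_le_one]
        intro H hH H' hH'
        simp only [mem_filter, mem_Hall] at hH hH'
        by_contra hne
        have hu : f univ ≤ f (H ∪ H') := by
          by_cases hsub : H' ⊆ H
          · have : ∃ e ∈ H, e ∉ H' := by
              by_contra hh
              push Not at hh
              exact hne (Finset.Subset.antisymm hh hsub)
            obtain ⟨e, he, he'⟩ := this
            have h2 := hH'.1.1 e he'
            have h3 := hf.2.1 (insert e H') (H ∪ H') (by
              intro x hx; simp at hx ⊢; rcases hx with rfl | hx <;> tauto)
            have := hH'.1.2.1
            omega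
          · obtain ⟨e, he, he'⟩ := Finset.not_subset.1 hsub
            have h2 := hH.1.1 e he'
            have h3 := hf.2.1 (insert e H) (H ∪ H') (by
              intro x hx; simp at hx ⊢; rcases hx with rfl | hx <;> tauto)
            have := hH.1.2.1
            omega
        have h2 := hf.2.2 H H'
        have h3 := hi (H ∩ H') (by have := hH.1.2.1; have := hH'.1.2.1; omega)
        refine hb (mem_Bad hc (H ∩ H') (by omega) ?_)
        intro t ht
        rw [mem_inter, not_and_or] at ht
        rcases ht with ht | ht
        · rw [hH.2 t ht]; omega
        · rw [hH'.2 t ht]; omega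
      · rw [Nat.succ_le_iff, Finset.card_pos]
        unfold isSpan at hs
        push Not at hs
        obtain ⟨F, hF⟩ := hs
        have hct : ∀ t, t ∉ F → c t ≤ ∑ t ∈ Fᶜ, c t := fun t ht =>
          Finset.single_le_sum (f := c) (fun _ _ => Nat.zero_le _) (by simpa using ht)
        have hFc : n - F.card ≤ i := by
          by_contra hh
          exact hb (mem_Bad hc F (by omega) (fun t ht => by have := hct t ht; omega))
        have hfF : f F + 1 = f univ := by
          by_contra hh
          have := hi F (by omega)
          omega
        obtain ⟨H, hH, hmax⟩ := Finset.exists_max_image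
          ((univ : Finset (Finset (Fin n))).filter fun H => F ⊆ H ∧ f H = f F) card
          ⟨F, by simp⟩
        simp only [mem_filter, mem_univ, true_and] at hH hmax
        refine ⟨H, ?_⟩
        simp only [mem_filter, mem_Hall]
        refine ⟨⟨?_, by omega, ?_⟩, ?_⟩
        · intro e he
          refine lt_of_le_of_ne (hf.2.1 _ _ (subset_insert _ _)) ?_
          intro heq
          have := hmax (insert e H) ⟨hH.1.trans (subset_insert _ _), by omega⟩
          rw [card_insert_of_notMem he] at this
          omega
        · have := card_le_card hH.1
          omega
        · intro t ht
          have := hct t (fun h => ht (hH.1 h))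
          omega
    rw [h1]; simp

open Classical in
lemma error_bound {n : ℕ} {f : Finset (Fin n) → ℕ} (hf : IsPolymatroidRank n f) {i : ℕ}
    (hi : ∀ F : Finset (Fin n), f F + 2 ≤ f univ → i < n - F.card) (K : ℕ) :
    |((boxS n univ (f univ + K)).card : ℤ) -
        (((boxS n univ (f univ + K)).filter (isSpan n f)).card : ℤ) -
        ((∑ H ∈ Hall n f i, (boxS n H (f univ + K)).card : ℕ) : ℤ)| ≤
      ((2^n * (2^n * ((f univ+1)^n * (f univ+1)^(n-i-1))) : ℕ) : ℤ) * ((K:ℤ)+1)^(n-i-1) := by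
  set N := f univ + K with hN
  have hA : ((∑ H ∈ Hall n f i, (boxS n H N).card : ℕ) : ℤ) =
      ∑ c ∈ boxS n univ N, (((Hall n f i).filter fun H => ∀ t, t ∉ H → c t = 0).card : ℤ) := by
    have h1 : ∀ H, boxS n H N = (boxS n univ N).filter fun c => ∀ t, t ∉ H → c t = 0 := by
      intro H; ext c; simp [mem_boxS]
    rw [Finset.sum_congr rfl (fun H _ => congrArg card (h1 H))]
    simp only [Finset.card_filter]
    push_cast
    rw [Finset.sum_comm]
  have hB : ((boxS n univ N).card : ℤ) - (((boxS n univ N).filter (isSpan n f)).card : ℤ) =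
      ∑ c ∈ boxS n univ N, (if isSpan n f c then (0:ℤ) else 1) := by
    have := Finset.card_filter_add_card_filter_not (s := boxS n univ N) (isSpan n f)
    rw [← this, Finset.sum_ite]
    simp
  rw [hA, hB, ← Finset.sum_sub_distrib]
  refine (Finset.abs_sum_le_sum_abs _ _).trans ?_
  refine (Finset.sum_le_sum fun c hc => pointwise hf hi hc).trans ?_
  rw [← Finset.sum_filter, Finset.sum_const, nsmul_eq_mul]
  have h1 : ((boxS n univ N).filter fun c => c ∈ Bad n (f univ) (n-i-1) N).card ≤
      2^n * ((f univ+1)^n * ((f univ+1)^(n-i-1) * (K+1)^(n-i-1))) := by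
    refine le_trans (card_le_card ?_) (card_Bad n (f univ) (n-i-1) K)
    intro c hc
    exact (mem_filter.1 hc).2
  zify at h1
  calc _ ≤ _ := mul_le_mul_of_nonneg_right h1 (by positivity)
    _ = _ := by push_cast; ring

theorem stmt0 (n : ℕ) (f : Finset (Fin n) → ℕ) (hf : IsPolymatroidRank n f)
    (i : ℕ) (hi : i < rk n f 2) :
    (exteriorPoly n f).coeff i =
      ((f Finset.univ + i - 1).choose i : ℤ) -
        ∑ j ∈ Finset.range (i + 1),
          ((f Finset.univ + i - 1 - j).choose (i - j) : ℤ) * ((Hset n f j).card : ℤ) := by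
  classical
  have hi' : ∀ F : Finset (Fin n), f F + 2 ≤ f univ → i < n - F.card := by
    intro F hF
    refine lt_of_lt_of_le hi (Nat.sInf_le ⟨F, ?_, rfl⟩)
    push_cast
    omega
  have hne : ∃ F : Finset (Fin n), f F + 2 ≤ f univ := by
    by_contra h
    push Not at h
    have : rk n f 2 = 0 := by
      unfold rk
      rw [Nat.sInf_eq_zero]
      right
      rw [Set.eq_empty_iff_forall_notMem]
      rintro m ⟨F, hF, -⟩
      have := h F
      push_cast at hF
      omega
    omega
  obtain ⟨F0, hF0⟩ := hne
  have hin : i < n := lt_of_lt_of_le (hi' F0 hF0) (Nat.sub_le _ _)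
  obtain ⟨d, hd⟩ : ∃ d, f univ = d + 1 := ⟨f univ - 1, by omega⟩
  -- the difference of coefficients
  let z : ℕ → ℤ := fun e => ((d + e).choose e : ℤ) - (exteriorPoly n f).coeff e -
    ∑ j ∈ range (i+1), if j ≤ e then
      ((d + (e - j)).choose (e - j) : ℤ) * ((Hset n f j).card : ℤ) else 0
  have hz : z i = 0 := by
    refine asym n i hin z (2^n * (2^n * ((f univ+1)^n * (f univ+1)^(n-i-1)))) ?_ i le_rfl
    intro K
    refine le_of_eq_of_le ?_ (error_bound hf hi' K)
    congr 1
    rw [span_count hf, sum_Hall, card_boxS]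
    have e1 : ∑ e ∈ range (n+1), ((d + e).choose e : ℤ) * ((n - e + K).choose (n - e) : ℤ)
        = ((n + (f univ + K)).choose n : ℤ) := by
      have := conv_aux d K n
      rw [hd, ← add_assoc]
      exact_mod_cast this
    have e2 : ∑ e ∈ range (n+1), (exteriorPoly n f).coeff e * ((n - e + K).choose (n - e) : ℤ)
        = ∑ a ∈ polyBases n f, (((extAct n f a).card + K).choose (extAct n f a).card : ℤ) := by
      unfold exteriorPoly
      simp only [Polynomial.finsetSum_coeff, Polynomial.coeff_X_pow, Finset.sum_mul]
      rw [Finset.sum_comm]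
      apply Finset.sum_congr rfl
      intro a _
      have hle : (extAct n f a).card ≤ n := by
        have := card_le_univ (extAct n f a)
        simpa using this
      simp only [ite_mul, one_mul, zero_mul]
      rw [Finset.sum_ite_eq' , if_pos (by simp)]
      rw [show n - (n - (extAct n f a).card) = (extAct n f a).card by omega]
    have e3 : ∑ e ∈ range (n+1), (∑ j ∈ range (i+1), if j ≤ e then
        ((d + (e - j)).choose (e - j) : ℤ) * ((Hset n f j).card : ℤ) else 0) *
          ((n - e + K).choose (n - e) : ℤ)
        = ∑ j ∈ range (i+1), ((Hset n f j).card : ℤ) *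
          ((n - j + (f univ + K)).choose (n - j) : ℤ) := by
      simp only [Finset.sum_mul]
      rw [Finset.sum_comm]
      apply Finset.sum_congr rfl
      intro j hj
      rw [mem_range] at hj
      have h1 := conv_aux d K (n - j)
      rw [hd, ← add_assoc, ← h1]
      push_cast
      rw [Finset.mul_sum]
      have h2 : range (n+1) = range (j + (n - j + 1)) := by congr 1; omega
      rw [h2, Finset.sum_range_add]
      rw [Finset.sum_eq_zero (s := range j), zero_add]
      · apply Finset.sum_congr rfl
        intro x hx
        rw [if_pos (by omega), show j + x - j = x by omega, show n - (j + x) = n - j - x by omega]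
        ring
      · intro x hx
        rw [mem_range] at hx
        rw [if_neg (by omega), zero_mul]
    simp only [z, sub_mul, Finset.sum_sub_distrib]
    rw [e1, e2, e3]
    push_cast
    simp
  have h1 : ∑ j ∈ Finset.range (i + 1),
          ((f Finset.univ + i - 1 - j).choose (i - j) : ℤ) * ((Hset n f j).card : ℤ)
      = ∑ j ∈ range (i+1), if j ≤ i then
      ((d + (i - j)).choose (i - j) : ℤ) * ((Hset n f j).card : ℤ) else 0 := by
    apply Finset.sum_congr rfl
    intro j hj
    rw [mem_range] at hj
    rw [if_pos (by omega), show f univ + i - 1 - j = d + (i - j) by omega]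
  rw [h1, show f univ + i - 1 = d + i by omega]
  simp only [z] at hz
  linarith
end

section
/- Let P ⊆ ℤ^n_{≥0} be a polymatroid over [n] with rank function f, and let P* be the polymatroid with rank function f* given by f*(I) = f([n]\I) − f([n]) + Σ_{i∈I} f({i}). Then for every positive integer j, C_j(P) = {[n]\H : H ∈ H_j(P*)}. -/
open Finset Polynomial

theorem sum_ge_rank (n : ℕ) (f : Finset (Fin n) → ℕ) (hf : IsPolymatroidRank n f)
    (C : Finset (Fin n)) : f C ≤ ∑ i ∈ C, f {i} := by
  induction C using Finset.induction_on with
  | empty => simp [hf.1]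
  | insert a s ha ih =>
    rw [Finset.sum_insert ha]
    have h := hf.2.2 {a} s
    rw [← Finset.insert_eq] at h
    omega

theorem fdual_compl (n : ℕ) (f : Finset (Fin n) → ℕ) (hf : IsPolymatroidRank n f)
    (C : Finset (Fin n)) :
    (fdual n f (univ \ C) : ℤ) + ((∑ i ∈ C, (f {i} : ℤ)) - (f C : ℤ)) = fdual n f univ := by
  have h1 := sum_ge_rank n f hf (univ \ C)
  have h2 := hf.2.2 C (univ \ C)
  have h3 := sum_ge_rank n f hf univ
  have h4 : ∑ i ∈ univ \ C, f {i} + ∑ i ∈ C, f {i} = ∑ i, f {i} :=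
    Finset.sum_sdiff (Finset.subset_univ C)
  have h5 : C ∪ (univ \ C) = univ := by simp
  have h6 : univ \ (univ \ C) = C := by simp
  have h7 := hf.1
  rw [h5] at h2
  simp only [fdual, h6, Finset.sdiff_self, h7]
  rw [← Nat.cast_sum]
  omega

/-- For every positive integer `j`,
`C_j(P) = { [n] \ H : H ∈ H_j(P*) }` where `P*` is the dual polymatroid. -/
theorem stmt6 (n : ℕ) (f : Finset (Fin n) → ℕ) (hf : IsPolymatroidRank n f)
    (j : ℕ) (hj : 1 ≤ j) :
    Cset n f j = (Hset n (fdual n f) j).image fun H => Finset.univ \ H := by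
  have key := fdual_compl n f hf
  have pos : ∀ C : Finset (Fin n), (f C : ℤ) ≤ ∑ i ∈ C, (f {i} : ℤ) := fun C => by
    exact_mod_cast sum_ge_rank n f hf C
  have ins : ∀ (C : Finset (Fin n)) (e : Fin n), e ∈ C →
      insert e (univ \ C) = univ \ C.erase e := by
    intro C e he
    ext x
    by_cases hx : x = e <;> simp [hx]
  have main : ∀ C : Finset (Fin n), C ∈ Cset n f j ↔ univ \ C ∈ Hset n (fdual n f) j := by
    intro C
    have hc : n - (univ \ C).card = C.card := by
      have := Finset.card_sdiff_add_card_eq_card (Finset.subset_univ C)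
      rw [Finset.card_univ, Fintype.card_fin] at this
      omega
    simp only [Cset, Hset, Finset.mem_filter, Finset.mem_univ, true_and, hc]
    have k0 := key C
    constructor
    · rintro ⟨h1, h2, h3⟩
      refine ⟨fun e he => ?_, by omega, h1⟩
      have he' : e ∈ C := by simpa using he
      rw [ins C e he']
      have k1 := key (C.erase e)
      have := h3 e he'
      omega
    · rintro ⟨h1, h2, h3⟩
      refine ⟨h3, by omega, fun e he => ?_⟩
      have h := h1 e (by simpa using he)
      rw [ins C e he] at h
      have k1 := key (C.erase e)
      have := pos (C.erase e)
      omega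
  ext C
  rw [main, Finset.mem_image]
  constructor
  · intro h
    exact ⟨_, h, by simp⟩
  · rintro ⟨H, hH, rfl⟩
    simpa using hH
end

section
/- Let P ⊆ ℤ^n_{≥0} be a polymatroid over [n] with rank function f. If 2 < r_2(P), then |H_1(P)| ≤ 1, i.e., there is at most one flat H with f(H) = f([n])−1 and n−|H| = 1. -/
open Finset Polynomial

/-- If `2 < r_2(P)` then `|H_1(P)| ≤ 1`. -/
theorem stmt9 (n : ℕ) (f : Finset (Fin n) → ℕ) (hf : IsPolymatroidRank n f)
    (h2 : 2 < rk n f 2) : (Hset n f 1).card ≤ 1 := by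
  rw [Finset.card_le_one]
  intro H hH K hK
  by_contra hne
  simp only [Hset, Finset.mem_filter, Finset.mem_univ, true_and] at hH hK
  obtain ⟨-, hH1, hH2⟩ := hH
  obtain ⟨-, hK1, hK2⟩ := hK
  have hu : H ⊂ H ∪ K := by
    refine Finset.ssubset_iff_subset_ne.2 ⟨Finset.subset_union_left, fun h => hne ?_⟩
    have hKH : K ⊆ H := by
      rw [h]
      exact Finset.subset_union_right
    exact (Finset.eq_of_subset_of_card_le hKH (by omega)).symm
  have hc := Finset.card_lt_card hu
  have hle : (H ∪ K).card ≤ n := by simpa using Finset.card_le_univ (H ∪ K)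
  have huniv : H ∪ K = Finset.univ := by
    rw [← Finset.card_eq_iff_eq_univ, Fintype.card_fin]
    omega
  have hsub := hf.2.2 H K
  have hcard := Finset.card_union_add_card_inter H K
  rw [huniv] at hsub
  have hr : rk n f 2 ≤ n - (H ∩ K).card := by
    apply Nat.sInf_le
    refine ⟨H ∩ K, ?_, rfl⟩
    push_cast
    omega
  omega
end

section
/- Let P ⊆ ℤ^n_{≥0} be a polymatroid over [n] with rank function f, and let t ∈ [n] satisfy f([n]\{t}) = f([n]). For j ≥ 0, let H^t_j(P) = {H ∈ H_j(P) : t ∉ H}. Then {H ∪ {t} : H ∈ H_j(P̂^t_k)} = H_j(P) \ H^t_j(P) holds in each of the following cases: (a) k = f({t}) and 0 ≤ j < r_2(P); (b) k ∈ T_t with 0 < k < f({t}) and 0 ≤ j < r_2(P)−1. -/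
open Finset Polynomial

/-- `H_j(Q)` for a polymatroid `Q` over a ground set `S ⊆ [n]` with (ℤ-valued) rank
function `g`: the flats `H ⊆ S` (i.e. `g (H ∪ {e}) > g H` for all `e ∈ S \ H`) with
`g H = g S - 1` and `|S| - |H| = j`. -/
def HjGen (n : ℕ) (S : Finset (Fin n)) (g : Finset (Fin n) → ℤ) (j : ℕ) :
    Finset (Finset (Fin n)) :=
  S.powerset.filter fun H =>
    (∀ e ∈ S \ H, g H < g (insert e H)) ∧ g H = g S - 1 ∧ S.card - H.card = j

/-- Let `t ∈ [n]` with `f([n]\{t}) = f([n])`.  In each of the cases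
(a) `k = f {t}` and `j < r_2(P)`, (b) `0 < k < f {t}` and `j < r_2(P) - 1`,
one has `{H ∪ {t} : H ∈ H_j(P̂^t_k)} = H_j(P) \ H^t_j(P)`, where `P̂^t_k` is the
polymatroid over `[n]\{t}` with rank function `I ↦ min (f I) (f (I ∪ {t}) - k)` and
`H^t_j(P) = {H ∈ H_j(P) : t ∉ H}`. -/
theorem stmt10 (n : ℕ) (f : Finset (Fin n) → ℕ) (hf : IsPolymatroidRank n f)
    (t : Fin n) (ht : f (Finset.univ.erase t) = f Finset.univ) (k j : ℕ)
    (hcase : (k = f {t} ∧ j < rk n f 2) ∨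
      (0 < k ∧ k < f {t} ∧ j < rk n f 2 - 1)) :
    (HjGen n (Finset.univ.erase t)
        (fun I => min ((f I : ℤ)) ((f (insert t I) : ℤ) - (k : ℤ))) j).image
        (fun H => insert t H) =
      HjGen n Finset.univ (fun I => (f I : ℤ)) j \
        ((HjGen n Finset.univ (fun I => (f I : ℤ)) j).filter fun H => t ∉ H) := by
  obtain ⟨h0, hm, hs⟩ := hf
  have hn : 0 < n := Nat.pos_of_ne_zero (fun h => by subst h; exact t.elim0)
  have key : ∀ H : Finset (Fin n), t ∉ H → (n - 1) - H.card = j →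
      ∀ I, H ⊆ I → f (insert t I) ≤ f I + k := by
    intro H htH hj I hI
    rcases hcase with ⟨hk, -⟩ | ⟨hk0, -, hr⟩
    · have h1 := hs I {t}
      have h2 : I ∪ {t} = insert t I := by
        ext x; simp [or_comm]
      rw [h2] at h1
      omega
    · have hH : f univ ≤ f H + 1 := by
        by_contra hc
        have : rk n f 2 ≤ n - H.card := by
          apply Nat.sInf_le
          refine ⟨H, ?_, rfl⟩
          push_cast
          omega
        omega
      have h1 := hm H I hI
      have h2 := hm (insert t I) univ (subset_univ _)
      omega
  have hgS : min (f (univ.erase t) : ℤ) ((f (insert t (univ.erase t)) : ℤ) - (k : ℤ))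
      = f univ - k := by
    rw [insert_erase (mem_univ t), ht]
    apply min_eq_right
    omega
  have hiff : ∀ H : Finset (Fin n), t ∉ H →
      (H ∈ HjGen n (univ.erase t)
        (fun I => min ((f I : ℤ)) ((f (insert t I) : ℤ) - (k : ℤ))) j ↔
      insert t H ∈ HjGen n univ (fun I => (f I : ℤ)) j) := by
    intro H htH
    have hsub : H ⊆ univ.erase t := fun x hx =>
      mem_erase.2 ⟨fun h => htH (h ▸ hx), mem_univ x⟩
    have hcS : (univ.erase t : Finset (Fin n)).card = n - 1 := by
      rw [card_erase_of_mem (mem_univ t)]; simp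
    have hcard : (univ.erase t : Finset (Fin n)).card - H.card
        = (univ : Finset (Fin n)).card - (insert t H).card := by
      rw [hcS, card_insert_of_notMem htH]; simp; omega
    unfold HjGen
    simp only [mem_filter, mem_powerset, hgS, hsub, subset_univ, true_and]
    rw [← hcard]
    by_cases hj : (univ.erase t : Finset (Fin n)).card - H.card = j
    · have kk := key H htH (by rw [← hcS]; exact hj)
      have gH : ∀ I, H ⊆ I → min ((f I : ℤ)) ((f (insert t I) : ℤ) - (k : ℤ))
          = (f (insert t I) : ℤ) - (k : ℤ) := by
        intro I hI
        have := kk I hI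
        apply min_eq_right
        omega
      rw [gH H (Subset.refl _)]
      simp only [hj, and_true]
      refine and_congr ?_ (by omega)
      constructor
      · intro h e he
        have he' : e ≠ t ∧ e ∉ H := by simpa using he
        have h1 := h e (by simp [he'])
        rw [gH _ (subset_insert _ _), Finset.insert_comm] at h1
        omega
      · intro h e he
        have he' : e ≠ t ∧ e ∉ H := by simpa using he
        have h1 := h e (by simp [he'])
        rw [gH _ (subset_insert _ _), Finset.insert_comm]
        omega
    · simp only [hj, and_false]
  ext K
  simp only [mem_image, mem_sdiff, mem_filter, not_and, not_not]
  constructor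
  · rintro ⟨H, hH, rfl⟩
    have htH : t ∉ H := by
      intro h
      have := mem_powerset.1 (mem_filter.1 hH).1 h
      simp at this
    exact ⟨(hiff H htH).1 hH, fun _ => mem_insert_self _ _⟩
  · rintro ⟨h1, h2⟩
    have h3 := insert_erase (h2 h1)
    exact ⟨K.erase t, (hiff _ (notMem_erase t K)).2 (by rw [h3]; exact h1), h3⟩
end

section
/- Let 𝓗 = (V,E) be a connected hypergraph with associated bipartite graph Bip 𝓗. Set g = Σ_{e∈E} deg_{Bip 𝓗}(e) − |E| − |V| + 1, r'_2(𝓗) = min{|H'| : H' ⊆ E such that Bip 𝓗|_{H'} contains at least 2 cycles}, and, for j ≥ 1, C_j(𝓗) = {H' ⊆ E : Bip 𝓗|_{H'} has exactly one cycle, that cycle has length 2j, and |H'| = j}. Then for all i with 0 ≤ i < r'_2(𝓗), [x^i]I_𝓗(x) = C(g+i−1, i) − Σ_{j=0}^{i} C(g+i−1−j, i−j)·|C_j(𝓗)|, where C(·,·) denotes the binomial coefficient and C_0(𝓗) = ∅. -/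
open Finset Polynomial

/-- The bipartite graph `Bip 𝓗` associated with the hypergraph `𝓗 = (V, E)` (hyperedges are
given as a family `E : Fin m → Finset V`, so that repeated hyperedges are allowed):
`v ∈ V` is adjacent to `e ∈ E` iff `v ∈ e`. -/
def bipGraph {V : Type*} (m : ℕ) (E : Fin m → Finset V) : SimpleGraph (V ⊕ Fin m) :=
  SimpleGraph.fromRel fun x y =>
    ∃ (v : V) (e : Fin m), v ∈ E e ∧ x = Sum.inl v ∧ y = Sum.inr e

/-- The vertex set of `Bip 𝓗|_{E'}`: the hyperedges in `E'` together with all vertices of `V`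
incident with an element of `E'`. -/
def bipVerts {V : Type*} (m : ℕ) (E : Fin m → Finset V) (E' : Finset (Fin m)) :
    Set (V ⊕ Fin m) :=
  {x | ∃ e ∈ E', x = Sum.inr e ∨ ∃ v ∈ E e, x = Sum.inl v}

/-- The graph `Bip 𝓗|_{E'}`: the subgraph of `Bip 𝓗` induced by `bipVerts`. -/
def restGraph {V : Type*} (m : ℕ) (E : Fin m → Finset V) (E' : Finset (Fin m)) :
    SimpleGraph (bipVerts m E E') :=
  SimpleGraph.induce (bipVerts m E E') (bipGraph m E)

/-- `c(E')`: the number of connected components of `Bip 𝓗|_{E'}`. -/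
noncomputable def compCount {V : Type*} (m : ℕ) (E : Fin m → Finset V)
    (E' : Finset (Fin m)) : ℕ :=
  Nat.card (restGraph m E E').ConnectedComponent

/-- The rank function `μ` of the hypergraphical polymatroid:
`μ(∅) = 0` and `μ(E') = |⋃ E'| - c(E')`. -/
noncomputable def muRank {V : Type*} [DecidableEq V] (m : ℕ) (E : Fin m → Finset V) :
    Finset (Fin m) → ℕ :=
  fun E' => (E'.biUnion E).card - compCount m E E'

/-- `Bip 𝓗|_{H'}` contains at least two (distinct) cycles: there are two cycles whose
edge sets differ. -/
def hasTwoCycles {V : Type*} (m : ℕ) (E : Fin m → Finset V) (H' : Finset (Fin m)) : Prop :=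
  ∃ (u₁ : bipVerts m E H') (w₁ : (restGraph m E H').Walk u₁ u₁)
    (u₂ : bipVerts m E H') (w₂ : (restGraph m E H').Walk u₂ u₂),
      w₁.IsCycle ∧ w₂.IsCycle ∧ {x | x ∈ w₁.edges} ≠ {x | x ∈ w₂.edges}

open Classical in
/-- `C_j(𝓗)`: the sets `H' ⊆ E` with `|H'| = j` such that `Bip 𝓗|_{H'}` has exactly one
cycle (all cycles have the same edge set) and this cycle has length `2j`. -/
noncomputable def hypCj {V : Type*} (m : ℕ) (E : Fin m → Finset V) (j : ℕ) :
    Finset (Finset (Fin m)) :=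
  Finset.univ.filter fun H' =>
    H'.card = j ∧
    ∃ (u : bipVerts m E H') (w : (restGraph m E H').Walk u u), w.IsCycle ∧
      w.length = 2 * j ∧
      ∀ (u' : bipVerts m E H') (w' : (restGraph m E H').Walk u' u'), w'.IsCycle →
        {x | x ∈ w'.edges} = {x | x ∈ w.edges}


section PolyPart

/-- `d` satisfies all lower bounds given by `ν`. -/
def inQ {n : ℕ} (ν : Finset (Fin n) → ℤ) (d : Fin n → ℤ) : Prop :=
  ∀ I : Finset (Fin n), ν I ≤ ∑ i ∈ I, d i

def isB {n : ℕ} (ν : Finset (Fin n) → ℤ) (d : Fin n → ℤ) : Prop :=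
  inQ ν d ∧ ∑ i, d i = ν Finset.univ

def shiftB {n : ℕ} (b : Fin n → ℤ) (i j : Fin n) : Fin n → ℤ :=
  fun t => b t + (if t = i then 1 else 0) - (if t = j then 1 else 0)

def actB {n : ℕ} (ν : Finset (Fin n) → ℤ) (b : Fin n → ℤ) (i : Fin n) : Prop :=
  ∀ j, j < i → ¬ isB ν (shiftB b i j)

structure SupMod {n : ℕ} (ν : Finset (Fin n) → ℤ) : Prop where
  h0 : ν ∅ = 0
  h1 : ∀ i, ν {i} = 0
  hs : ∀ I J, ν I + ν J ≤ ν (I ∪ J) + ν (I ∩ J)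

variable {n : ℕ} {ν : Finset (Fin n) → ℤ}

lemma sum_shiftB (b : Fin n → ℤ) (i j : Fin n) (I : Finset (Fin n)) :
    ∑ t ∈ I, shiftB b i j t =
      ∑ t ∈ I, b t + (if i ∈ I then 1 else 0) - (if j ∈ I then 1 else 0) := by
  simp [shiftB, Finset.sum_add_distrib, Finset.sum_sub_distrib]

lemma SupMod.mono (h : SupMod ν) {I J : Finset (Fin n)} (hIJ : I ⊆ J) : ν I ≤ ν J := by
  classical
  have key : ∀ K : Finset (Fin n), ν I ≤ ν (I ∪ K) := by
    intro K
    induction K using Finset.induction_on with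
    | empty => simp
    | insert a s _ ih =>
      rw [Finset.union_insert]
      by_cases ha : a ∈ I ∪ s
      · rwa [Finset.insert_eq_of_mem ha]
      · have h1 := h.hs (I ∪ s) {a}
        rw [Finset.inter_singleton_of_notMem ha, h.h0, h.h1, Finset.union_comm _ {a},
          ← Finset.insert_eq] at h1
        linarith
  have := key J
  rwa [Finset.union_eq_right.mpr hIJ] at this

lemma SupMod.nonneg (h : SupMod ν) (I : Finset (Fin n)) : 0 ≤ ν I := by
  have := h.mono (Finset.empty_subset I)
  rw [h.h0] at this; exact this

lemma inQ.nonneg (h : SupMod ν) {d : Fin n → ℤ} (hd : inQ ν d) (i : Fin n) : 0 ≤ d i := by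
  have := hd {i}
  rw [h.h1] at this; simpa using this

lemma tight_union (h : SupMod ν) {d : Fin n → ℤ} (hd : inQ ν d) {S T : Finset (Fin n)}
    (hS : ∑ i ∈ S, d i = ν S) (hT : ∑ i ∈ T, d i = ν T) :
    ∑ i ∈ S ∪ T, d i = ν (S ∪ T) := by
  have h1 := h.hs S T
  have h2 := hd (S ∪ T)
  have h3 := hd (S ∩ T)
  have h4 := Finset.sum_union_inter (s₁ := S) (s₂ := T) (f := d)
  linarith

/-- the union of a family of tight sets, described by a predicate, is tight -/
lemma tight_sup (h : SupMod ν) {d : Fin n → ℤ} (hd : inQ ν d) (F : Finset (Finset (Fin n)))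
    (hF : ∀ S ∈ F, ∑ i ∈ S, d i = ν S) :
    ∑ i ∈ F.sup id, d i = ν (F.sup id) := by
  classical
  induction F using Finset.induction_on with
  | empty => simp [h.h0]
  | insert a s ha ih =>
    rw [Finset.sup_insert]
    exact tight_union h hd (hF a (by simp)) (ih fun S hS => hF S (by simp [hS]))

lemma isB_shift {b : Fin n → ℤ} (hb : isB ν b) {i j : Fin n}
    (hno : ∀ T : Finset (Fin n), ∑ t ∈ T, b t = ν T → j ∈ T → i ∈ T) :
    isB ν (shiftB b i j) := by
  constructor
  · intro I
    rw [sum_shiftB]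
    have h1 := hb.1 I
    have h2 := hno I
    by_cases hi : i ∈ I <;> by_cases hj : j ∈ I <;> simp only [hi, hj, if_true, if_false]
    · linarith
    · linarith
    · have : ν I ≠ ∑ t ∈ I, b t := fun h => hi (h2 h.symm hj)
      have := lt_of_le_of_ne h1 this
      linarith [Int.add_one_le_iff.mpr this]
    · linarith
  · rw [sum_shiftB]; simp [hb.2]

lemma exchangeB (h : SupMod ν) {b b' : Fin n → ℤ} (hb : isB ν b) (hb' : isB ν b') {i : Fin n}
    (hi : b i < b' i) : ∃ j, b' j < b j ∧ isB ν (shiftB b i j) := by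
  classical
  set F := (Finset.univ : Finset (Finset (Fin n))).filter
    (fun T => ∑ t ∈ T, b t = ν T ∧ i ∉ T) with hF
  set U := F.sup id with hU
  have hUt : ∑ t ∈ U, b t = ν U := tight_sup h hb.1 F (by intro S hS; simp [hF] at hS; exact hS.1)
  have hiU : i ∉ U := by
    simp [hU, Finset.mem_sup, hF]
  by_contra hcon
  push Not at hcon
  have hle : ∀ j ∈ Uᶜ, b j ≤ b' j := by
    intro j hj
    by_contra hlt
    push Not at hlt
    refine hcon j hlt (isB_shift hb ?_)
    intro T hT hjT
    by_contra hiT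
    have : T ⊆ U := Finset.le_sup (f := id) (by simp [hF, hT, hiT])
    simp at hj
    exact hj (this hjT)
  have hlt : ∑ j ∈ Uᶜ, b j < ∑ j ∈ Uᶜ, b' j :=
    Finset.sum_lt_sum hle ⟨i, by simpa using hiU, hi⟩
  have e1 := Finset.sum_add_sum_compl U b
  have e2 := Finset.sum_add_sum_compl U b'
  have := hb'.1 U
  linarith [hb.2, hb'.2]

lemma exists_isB_le (h : SupMod ν) {d : Fin n → ℤ} (hd : inQ ν d) :
    ∃ b, isB ν b ∧ ∀ i, b i ≤ d i := by
  classical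
  obtain ⟨b, hbm, hmin⟩ := Finset.exists_min_image
    ((Fintype.piFinset fun i => Finset.Icc 0 (d i)).filter (fun b => inQ ν b))
    (fun b => ∑ i, b i) ⟨d, by simp [hd, hd.nonneg h]⟩
  simp only [Finset.mem_filter, Fintype.mem_piFinset, Finset.mem_Icc] at hbm hmin
  refine ⟨b, ⟨hbm.2, ?_⟩, fun i => (hbm.1 i).2⟩
  set F := (Finset.univ : Finset (Finset (Fin n))).filter (fun T => ∑ t ∈ T, b t = ν T) with hF
  have hUt := tight_sup h hbm.2 F (by intro S hS; simpa [hF] using hS)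
  have : F.sup id = Finset.univ := by
    rw [Finset.eq_univ_iff_forall]
    intro j
    by_contra hj
    have hnot : ∀ T : Finset (Fin n), j ∈ T → ∑ t ∈ T, b t ≠ ν T := by
      intro T hjT hT
      apply hj
      have : T ⊆ F.sup id := Finset.le_sup (f := id) (by simp [hF, hT])
      exact this hjT
    have hbj : 1 ≤ b j := by
      have h1 := hnot {j} (by simp)
      rw [h.h1] at h1
      have := (hbm.1 j).1
      simp at h1
      omega
    have := hmin (fun t => b t - if t = j then 1 else 0) ⟨?_, ?_⟩
    · simp [Finset.sum_sub_distrib] at this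
    · intro t
      have := hbm.1 t
      by_cases htj : t = j
      · subst htj; simp; omega
      · simpa [htj] using this
    · intro I
      have h1 := hbm.2 I
      have h2 := hnot I
      simp only [Finset.sum_sub_distrib, Finset.sum_ite_eq']
      split_ifs with hjI
      · have := lt_of_le_of_ne h1 (h2 hjI).symm
        omega
      · omega
  rwa [this] at hUt

open Classical in
noncomputable def Bs (ν : Finset (Fin n) → ℤ) : Finset (Fin n → ℤ) :=
  (Fintype.piFinset fun _ => Finset.Icc 0 (ν Finset.univ)).filter (fun b => isB ν b)

lemma isB.le (h : SupMod ν) {b : Fin n → ℤ} (hb : isB ν b) (i : Fin n) : b i ≤ ν Finset.univ := by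
  rw [← hb.2]
  exact Finset.single_le_sum (fun j _ => hb.1.nonneg h j) (Finset.mem_univ i)

lemma mem_Bs (h : SupMod ν) {b : Fin n → ℤ} : b ∈ Bs ν ↔ isB ν b := by
  classical
  simp only [Bs, Finset.mem_filter, Fintype.mem_piFinset, Finset.mem_Icc, and_iff_right_iff_imp]
  intro hb i
  exact ⟨hb.1.nonneg h i, hb.le h i⟩

lemma exists_cell (h : SupMod ν) {d : Fin n → ℤ} (hd : inQ ν d) :
    ∃ b, isB ν b ∧ (∀ i, b i ≤ d i) ∧ ∀ i, b i < d i → actB ν b i := by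
  classical
  obtain ⟨b0, hb0, hle0⟩ := exists_isB_le h hd
  obtain ⟨b, hbm, hmax⟩ := Finset.exists_max_image
    ((Bs ν).filter (fun b => ∀ i, b i ≤ d i))
    (fun b => ∑ i : Fin n, (i : ℤ) * b i) ⟨b0, by simp [mem_Bs h, hb0, hle0]⟩
  simp only [Finset.mem_filter, mem_Bs h] at hbm hmax
  refine ⟨b, hbm.1, hbm.2, ?_⟩
  intro i hi j hj hB
  have := hmax _ ⟨hB, ?_⟩
  · simp only [shiftB, mul_sub, mul_add, Finset.sum_sub_distrib, Finset.sum_add_distrib] at this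
    simp at this
    omega
  · intro t
    have := hbm.2 t
    simp only [shiftB]
    by_cases hti : t = i
    · subst hti; simp only [if_true]; split_ifs <;> omega
    · simp only [hti, if_false]; split_ifs <;> omega

lemma unique_cell (h : SupMod ν) {d b b' : Fin n → ℤ} (hb : isB ν b) (hb' : isB ν b')
    (hle : ∀ i, b i ≤ d i) (hle' : ∀ i, b' i ≤ d i)
    (ha : ∀ i, b i < d i → actB ν b i) (ha' : ∀ i, b' i < d i → actB ν b' i) : b = b' := by
  classical
  by_contra hne
  obtain ⟨k, hk⟩ := Function.ne_iff.mp hne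
  obtain ⟨i, hi, hmax⟩ := Finset.exists_max_image
    (Finset.univ.filter fun i => b i ≠ b' i) id ⟨k, by simpa using hk⟩
  simp only [Finset.mem_filter, Finset.mem_univ, true_and, id] at hi hmax
  have key : ∀ b b' : Fin n → ℤ, isB ν b → isB ν b' → (∀ i, b' i ≤ d i) →
      (∀ i, b i < d i → actB ν b i) → (∀ x, b x ≠ b' x → x ≤ i) → ¬ b i < b' i := by
    intro b b' hb hb' hle' ha hmax hlt
    obtain ⟨j, hj, hB⟩ := exchangeB h hb hb' hlt
    have hji : j ≤ i := hmax j hj.ne'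
    have : j ≠ i := by rintro rfl; omega
    exact ha i (lt_of_lt_of_le hlt (hle' i)) j (lt_of_le_of_ne hji this) hB
  rcases lt_or_gt_of_ne hi with h1 | h1
  · exact key b b' hb hb' hle' ha hmax h1
  · exact key b' b hb' hb hle ha' (fun x hx => hmax x hx.symm) h1

/-- one-variable weight -/
noncomputable def pw (M z : ℤ) : ℤ[X] := (1 - X) ^ z.toNat * (if z < M then X else 1)

lemma sum_pw (M a : ℤ) (ha : 0 ≤ a) (haM : a ≤ M) :
    ∑ z ∈ Finset.Icc a M, pw M z = (1 - X) ^ a.toNat := by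
  obtain ⟨k, hk⟩ : ∃ k : ℕ, M = a + k := ⟨(M - a).toNat, by omega⟩
  induction k generalizing a with
  | zero => simp at hk; subst hk; simp [pw]
  | succ k ih =>
    have hI : Finset.Icc a M = insert a (Finset.Icc (a + 1) M) := by
      ext z; simp; omega
    rw [hI, Finset.sum_insert (by simp), ih (a + 1) (by omega) (by omega) (by push_cast at hk; omega)]
    have h1 : (a + 1).toNat = a.toNat + 1 := by omega
    have h2 : a < M := by omega
    rw [h1, pw, if_pos h2]
    ring

open Classical in
noncomputable def cellB (ν : Finset (Fin n) → ℤ) (b : Fin n → ℤ) : Finset (Fin n → ℤ) :=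
  Fintype.piFinset fun i =>
    if actB ν b i then Finset.Icc (b i) (ν Finset.univ + 1) else {b i}

open Classical in
lemma box_eq (h : SupMod ν) :
    ((Fintype.piFinset fun _ : Fin n => Finset.Icc 0 (ν Finset.univ + 1)).filter
      (fun d => inQ ν d)) = (Bs ν).biUnion (cellB ν) := by
  ext d
  simp only [Finset.mem_filter, Finset.mem_biUnion, mem_Bs h, cellB, Fintype.mem_piFinset,
    Finset.mem_Icc]
  constructor
  · rintro ⟨hbox, hd⟩
    obtain ⟨b, hb, hle, ha⟩ := exists_cell h hd
    refine ⟨b, hb, fun i => ?_⟩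
    by_cases hi : actB ν b i
    · simp [hi, hle i, (hbox i).2]
    · have : b i = d i := le_antisymm (hle i) (not_lt.mp fun hlt => hi (ha i hlt))
      simp [hi, this]
  · rintro ⟨b, hb, hc⟩
    have hle : ∀ i, b i ≤ d i ∧ d i ≤ ν Finset.univ + 1 := by
      intro i
      have := hc i
      split_ifs at this
      · simpa using this
      · simp at this
        rw [this]
        exact ⟨le_rfl, by linarith [hb.le h i]⟩
    refine ⟨fun i => ⟨le_trans (hb.1.nonneg h i) (hle i).1, (hle i).2⟩, fun I => ?_⟩
    exact le_trans (hb.1 I) (Finset.sum_le_sum fun i _ => (hle i).1)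

lemma cell_disj (h : SupMod ν) :
    Set.PairwiseDisjoint (↑(Bs ν)) (cellB ν) := by
  classical
  intro b hb b' hb' hne
  have hb : isB ν b := (mem_Bs h).mp hb
  have hb' : isB ν b' := (mem_Bs h).mp hb'
  refine Finset.disjoint_left.mpr fun d hd hd' => hne ?_
  simp only [cellB, Fintype.mem_piFinset] at hd hd'
  refine unique_cell h (d := d) hb hb' ?_ ?_ ?_ ?_
  · intro i; have := hd i; split_ifs at this <;> simp at this <;> omega
  · intro i; have := hd' i; split_ifs at this <;> simp at this <;> omega
  · intro i hi; by_contra hc; have := hd i; simp [hc] at this; omega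
  · intro i hi; by_contra hc; have := hd' i; simp [hc] at this; omega

open Classical in
lemma main_identity (h : SupMod ν) :
    (1 - X : ℤ[X]) ^ (ν Finset.univ).toNat *
      ∑ b ∈ Bs ν, X ^ (n - (Finset.univ.filter fun i => actB ν b i).card) =
    ∑ d ∈ (Fintype.piFinset fun _ : Fin n => Finset.Icc 0 (ν Finset.univ + 1)).filter
      (fun d => inQ ν d), ∏ i, pw (ν Finset.univ + 1) (d i) := by
  rw [box_eq h, Finset.sum_biUnion (cell_disj h), Finset.mul_sum]
  refine Finset.sum_congr rfl fun b hb => ?_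
  have hb : isB ν b := (mem_Bs h).mp hb
  rw [cellB, ← Finset.prod_univ_sum]
  have : ∀ i, (∑ z ∈ (if actB ν b i then Finset.Icc (b i) (ν Finset.univ + 1) else {b i}),
      pw (ν Finset.univ + 1) z) = (1 - X) ^ (b i).toNat * (if actB ν b i then 1 else X) := by
    intro i
    have h1 := hb.le h i
    split_ifs
    · rw [sum_pw _ _ (hb.1.nonneg h i) (by omega)]; simp
    · rw [Finset.sum_singleton, pw, if_pos (by omega)]
  simp only [this]
  rw [Finset.prod_mul_distrib, Finset.prod_pow_eq_pow_sum]
  congr 1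
  · congr 1
    zify
    rw [Int.toNat_of_nonneg (h.nonneg _), ← hb.2]
    exact Finset.sum_congr rfl fun i _ => (Int.toNat_of_nonneg (hb.1.nonneg h i)).symm
  · rw [Finset.prod_ite]
    simp only [Finset.prod_const_one, one_mul, Finset.prod_const]
    congr 1
    rw [Finset.filter_not, Finset.card_sdiff_of_subset (by simp)]
    simp

open Classical in
noncomputable def circs (ν : Finset (Fin n) → ℤ) (j : ℕ) : Finset (Finset (Fin n)) :=
  Finset.univ.filter fun C => C.card = j ∧ ν C = 1 ∧ ∀ e ∈ C, ν (C.erase e) = 0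

lemma exists_circ (h : SupMod ν) {k : ℕ} (hk : ∀ H : Finset (Fin n), H.card ≤ k → ν H ≤ 1)
    {I : Finset (Fin n)} (hI : 0 < ν I) (hIk : I.card ≤ k) :
    ∃ C ⊆ I, ν C = 1 ∧ ∀ e ∈ C, ν (C.erase e) = 0 := by
  classical
  obtain ⟨C, hC, hmin⟩ := Finset.exists_min_image
    (I.powerset.filter fun C => 0 < ν C) Finset.card ⟨I, by simp [hI]⟩
  simp only [Finset.mem_filter, Finset.mem_powerset] at hC hmin
  refine ⟨C, hC.1, ?_, ?_⟩
  · have := hk C ((Finset.card_le_card hC.1).trans hIk)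
    omega
  · intro e he
    by_contra hne
    have h0 := h.nonneg (C.erase e)
    have := hmin (C.erase e) ⟨(Finset.erase_subset _ _).trans hC.1, by omega⟩
    have := Finset.card_erase_lt_of_mem he
    omega

open Classical in
lemma dvd_identity (h : SupMod ν) {k : ℕ}
    (hk : ∀ H : Finset (Fin n), H.card ≤ k → ν H ≤ 1) :
    (X : ℤ[X]) ^ (k + 1) ∣ (∑ d ∈ (Fintype.piFinset fun _ : Fin n =>
        Finset.Icc 0 (ν Finset.univ + 1)).filter
      (fun d => inQ ν d), ∏ i, pw (ν Finset.univ + 1) (d i)) - 1 +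
      ∑ j ∈ Finset.range (k + 1), ((circs ν j).card : ℤ[X]) * X ^ j := by
  set M := ν Finset.univ + 1 with hM
  have hg := h.nonneg Finset.univ
  set 𝒞 := (Finset.univ : Finset (Finset (Fin n))).filter
    (fun C => C.card ≤ k ∧ ν C = 1 ∧ ∀ e ∈ C, ν (C.erase e) = 0) with h𝒞
  set box := (Fintype.piFinset fun _ : Fin n => Finset.Icc 0 M) with hbox
  have e1 : (1 : ℤ[X]) = ∑ d ∈ box, ∏ i, pw M (d i) := by
    rw [hbox, ← Finset.prod_univ_sum]
    simp [sum_pw M 0 le_rfl (by omega)]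
  have e2 : ∀ C : Finset (Fin n), (X : ℤ[X]) ^ C.card =
      ∑ d ∈ box, (∏ i, pw M (d i)) * (if ∀ i ∈ C, d i = 0 then 1 else 0) := by
    intro C
    simp only [mul_ite, mul_one, mul_zero]
    rw [← Finset.sum_filter]
    have : box.filter (fun d => ∀ i ∈ C, d i = 0) =
        Fintype.piFinset (fun i => if i ∈ C then {0} else Finset.Icc 0 M) := by
      ext d
      simp only [hbox, Finset.mem_filter, Fintype.mem_piFinset]
      constructor
      · rintro ⟨h1, h2⟩ i
        split_ifs with hi
        · simp [h2 i hi]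
        · exact h1 i
      · intro h1
        constructor
        · intro i; have := h1 i; split_ifs at this
          · simp at this; simp [this]; omega
          · exact this
        · intro i hi; have := h1 i; simpa [hi] using this
    rw [this, ← Finset.prod_univ_sum]
    have : ∀ i, (∑ z ∈ (if i ∈ C then ({0} : Finset ℤ) else Finset.Icc 0 M), pw M z) =
        if i ∈ C then X else 1 := by
      intro i
      split_ifs
      · simp [pw, show (0:ℤ) < M by omega]
      · rw [sum_pw M 0 le_rfl (by omega)]; simp
    simp only [this]
    rw [Finset.prod_ite_mem]; simp
  have e3 : ∑ j ∈ Finset.range (k + 1), ((circs ν j).card : ℤ[X]) * X ^ j =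
      ∑ C ∈ 𝒞, X ^ C.card := by
    rw [← Finset.sum_fiberwise_of_maps_to (s := 𝒞) (t := Finset.range (k+1)) (g := Finset.card)
      (by intro C hC; simp [h𝒞] at hC; simp; omega)]
    refine Finset.sum_congr rfl fun j hj => ?_
    have : 𝒞.filter (fun C => C.card = j) = circs ν j := by
      ext C; simp [h𝒞, circs] at hj ⊢; constructor
      · rintro ⟨⟨_, h1, h2⟩, h3⟩; exact ⟨h3, h1, h2⟩
      · rintro ⟨h3, h1, h2⟩; exact ⟨⟨by omega, h1, h2⟩, h3⟩
    rw [this, Finset.sum_congr rfl (g := fun _ => X ^ j)]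
    · simp
    · intro C hC; simp [circs] at hC; rw [hC.1]
  rw [e3, Finset.sum_congr rfl (fun C _ => e2 C), Finset.sum_comm]
  rw [Finset.sum_filter]
  have e4 : (∑ d ∈ box, if inQ ν d then ∏ i, pw M (d i) else 0) - 1 +
      ∑ d ∈ box, ∑ C ∈ 𝒞, (∏ i, pw M (d i)) * (if ∀ i ∈ C, d i = 0 then 1 else 0) =
      ∑ d ∈ box, (∏ i, pw M (d i)) * ((if inQ ν d then 1 else 0) - 1 +
        ∑ C ∈ 𝒞, (if ∀ i ∈ C, d i = 0 then 1 else 0)) := by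
    rw [show (∑ d ∈ box, if inQ ν d then ∏ i, pw M (d i) else 0) - 1 =
      (∑ d ∈ box, if inQ ν d then ∏ i, pw M (d i) else 0) - ∑ d ∈ box, ∏ i, pw M (d i) by
        rw [← e1]]
    rw [← Finset.sum_sub_distrib, ← Finset.sum_add_distrib]
    refine Finset.sum_congr rfl fun d _ => ?_
    rw [mul_add, mul_sub, Finset.mul_sum]
    simp
  rw [e4]
  refine Finset.dvd_sum fun d hd => ?_
  have hd0 : ∀ i, 0 ≤ d i ∧ d i ≤ M := by
    intro i; simpa [hbox] using (Fintype.mem_piFinset.mp hd i)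
  set Z := Finset.univ.filter (fun i => d i < M) with hZ
  by_cases hZk : k + 1 ≤ Z.card
  · refine Dvd.dvd.mul_right ?_ _
    simp only [pw]
    rw [Finset.prod_mul_distrib, Finset.prod_ite]
    simp only [Finset.prod_const_one, mul_one, Finset.prod_const]
    exact Dvd.dvd.mul_left (pow_dvd_pow _ hZk) _
  · have hz : ((if inQ ν d then (1 : ℤ[X]) else 0) - 1 +
        ∑ C ∈ 𝒞, (if ∀ i ∈ C, d i = 0 then 1 else 0)) = 0 := by
      by_cases hQ : inQ ν d
      · simp only [hQ, if_true, sub_self, zero_add]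
        refine Finset.sum_eq_zero fun C hC => if_neg fun h0 => ?_
        have h1 := hQ C
        rw [Finset.sum_eq_zero h0] at h1
        simp [h𝒞] at hC
        omega
      · have hQ' := hQ
        simp only [inQ, not_forall, not_le] at hQ'
        obtain ⟨I, hI⟩ := hQ'
        have hIZ : I ⊆ Z := by
          intro i hi
          simp only [hZ, Finset.mem_filter, Finset.mem_univ, true_and]
          have h1 := Finset.single_le_sum (f := d) (fun j _ => (hd0 j).1) hi
          have h2 := h.mono (Finset.subset_univ I)
          omega
        have hIs : 0 ≤ ∑ i ∈ I, d i := Finset.sum_nonneg fun i _ => (hd0 i).1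
        have hIk : I.card ≤ k := by have := Finset.card_le_card hIZ; omega
        have hI1 := hk I hIk
        have hI0 : ∀ i ∈ I, d i = 0 :=
          (Finset.sum_eq_zero_iff_of_nonneg fun i _ => (hd0 i).1).mp (by omega)
        obtain ⟨C, hCI, hC1, hC2⟩ := exists_circ h hk (by omega : 0 < ν I) hIk
        rw [Finset.sum_eq_single C]
        · rw [if_neg hQ, if_pos fun i hi => hI0 i (hCI hi)]; ring
        · intro C' hC' hne
          refine if_neg fun h0 => ?_
          simp only [h𝒞, Finset.mem_filter, Finset.mem_univ, true_and] at hC'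
          have hU : C' ∪ C ⊆ Z := by
            intro i hi
            simp only [hZ, Finset.mem_filter, Finset.mem_univ, true_and]
            have : d i = 0 := by
              rcases Finset.mem_union.mp hi with hi | hi
              · exact h0 i hi
              · exact hI0 i (hCI hi)
            omega
          have hU1 := hk (C' ∪ C) (by have := Finset.card_le_card hU; omega)
          have hs := h.hs C' C
          have hprop : ∃ D : Finset (Fin n), (∀ e ∈ D, ν (D.erase e) = 0) ∧ C' ∩ C ⊆ D ∧
              ∃ e ∈ D, e ∉ C' ∩ C := by
            by_cases hsub : C' ⊆ C
            · refine ⟨C, hC2, Finset.inter_subset_right, ?_⟩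
              by_contra hcon
              push Not at hcon
              exact hne (Finset.Subset.antisymm hsub fun e he => (Finset.mem_inter.mp (hcon e he)).1)
            · refine ⟨C', hC'.2.2, Finset.inter_subset_left, ?_⟩
              obtain ⟨e, he, he'⟩ := Finset.not_subset.mp hsub
              exact ⟨e, he, by simp [he']⟩
          obtain ⟨D, hD, hDs, e, heD, he⟩ := hprop
          have h3 : C' ∩ C ⊆ D.erase e := fun x hx =>
            Finset.mem_erase.mpr ⟨by rintro rfl; exact he hx, hDs hx⟩
          have h4 := h.mono h3
          rw [hD e heD] at h4
          omega
        · intro hC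
          exfalso; apply hC
          simp only [h𝒞, Finset.mem_filter, Finset.mem_univ, true_and]
          exact ⟨(Finset.card_le_card hCI).trans hIk, hC1, hC2⟩
    rw [hz]; simp

open Classical in
lemma coeff_formula (h : SupMod ν) {k g : ℕ}
    (hk : ∀ H : Finset (Fin n), H.card ≤ k → ν H ≤ 1) (hg : ν Finset.univ = g) (hg1 : 0 < g) :
    (∑ b ∈ Bs ν, (X : ℤ[X]) ^ (n - (Finset.univ.filter fun i => actB ν b i).card)).coeff k =
      ((g + k - 1).choose k : ℤ) -
        ∑ j ∈ Finset.range (k + 1),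
          ((g + k - 1 - j).choose (k - j) : ℤ) * ((circs ν j).card : ℤ) := by
  have h1 := main_identity h
  obtain ⟨R, hR⟩ := dvd_identity h hk
  rw [← h1, hg] at hR
  set P := ∑ b ∈ Bs ν, (X : ℤ[X]) ^ (n - (Finset.univ.filter fun i => actB ν b i).card) with hP
  set S := ∑ j ∈ Finset.range (k + 1), ((circs ν j).card : ℤ[X]) * X ^ j with hS
  simp only [Int.toNat_natCast] at hR
  have hR' : (1 - X : ℤ[X]) ^ g * P = 1 - S + X ^ (k + 1) * R := by rw [← hR]; ring
  have hps := congrArg (fun p : ℤ[X] => (p : PowerSeries ℤ)) hR'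
  simp only [Polynomial.coe_mul, Polynomial.coe_pow, Polynomial.coe_sub, Polynomial.coe_add,
    Polynomial.coe_one, Polynomial.coe_X] at hps
  have hinv : (1 - PowerSeries.X : PowerSeries ℤ) ^ g * (PowerSeries.invOneSubPow ℤ g).val = 1 := by
    rw [← PowerSeries.invOneSubPow_inv_eq_one_sub_pow]
    exact (PowerSeries.invOneSubPow ℤ g).inv_val
  have hP2 : (P : PowerSeries ℤ) = (PowerSeries.invOneSubPow ℤ g).val -
      (PowerSeries.invOneSubPow ℤ g).val * (S : PowerSeries ℤ) +
      PowerSeries.X ^ (k + 1) * ((R : PowerSeries ℤ) * (PowerSeries.invOneSubPow ℤ g).val) := by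
    calc (P : PowerSeries ℤ) = ((1 - PowerSeries.X) ^ g * (P : PowerSeries ℤ)) *
          (PowerSeries.invOneSubPow ℤ g).val := by
            rw [mul_right_comm, hinv, one_mul]
      _ = _ := by rw [hps]; ring
  have hco : ∀ t, PowerSeries.coeff t (PowerSeries.invOneSubPow ℤ g).val =
      ((g + t - 1).choose t : ℤ) := by
    intro t
    rw [PowerSeries.invOneSubPow_val_eq_mk_sub_one_add_choose_of_pos ℤ g hg1,
      PowerSeries.coeff_mk]
    congr 1
    rw [show g + t - 1 = g - 1 + t by omega, Nat.choose_symm_add]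
  rw [← Polynomial.coeff_coe, hP2, map_add, map_sub, hco, PowerSeries.coeff_X_pow_mul']
  rw [if_neg (by omega), add_zero]
  congr 1
  have hS2 : (S : PowerSeries ℤ) = ∑ j ∈ Finset.range (k + 1),
      PowerSeries.C ((circs ν j).card : ℤ) * PowerSeries.X ^ j := by
    rw [← Polynomial.coeToPowerSeries.ringHom_apply, hS, map_sum]
    refine Finset.sum_congr rfl fun j _ => ?_
    simp only [map_mul, map_natCast, map_pow, Polynomial.coeToPowerSeries.ringHom_apply,
      Polynomial.coe_X]
  rw [hS2, Finset.mul_sum, map_sum]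
  refine Finset.sum_congr rfl fun j hj => ?_
  have hj : j ≤ k := by simpa [Nat.lt_succ_iff] using hj
  rw [mul_comm (PowerSeries.C _), ← mul_assoc, PowerSeries.coeff_mul_C,
    PowerSeries.coeff_mul_X_pow', if_pos hj, hco]
  congr 3
  omega

end PolyPart

section Transfer

variable {n : ℕ} {f : Finset (Fin n) → ℕ}

/-- nullity function of a polymatroid rank function -/
def nuOf (f : Finset (Fin n) → ℕ) (I : Finset (Fin n)) : ℤ := (∑ i ∈ I, (f {i} : ℤ)) - (f I : ℤ)

lemma nuOf_supMod (hf : IsPolymatroidRank n f) : SupMod (nuOf f) := by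
  refine ⟨by simp [nuOf, hf.1], by simp [nuOf], fun I J => ?_⟩
  have h1 := hf.2.2 I J
  have h2 := Finset.sum_union_inter (s₁ := I) (s₂ := J) (f := fun i => (f {i} : ℤ))
  simp only [nuOf]
  zify at h1
  linarith

lemma mem_polyBases_s13 (hf : IsPolymatroidRank n f) (a : Fin n → ℤ) :
    a ∈ polyBases n f ↔ isB (nuOf f) (fun i => (f {i} : ℤ) - a i) := by
  have h1 : isB (nuOf f) (fun i => (f {i} : ℤ) - a i) ↔
      (∀ I : Finset (Fin n), ∑ i ∈ I, a i ≤ (f I : ℤ)) ∧ ∑ i, a i = (f Finset.univ : ℤ) := by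
    simp only [isB, inQ, nuOf, Finset.sum_sub_distrib]
    constructor
    · rintro ⟨h1, h2⟩
      exact ⟨fun I => by linarith [h1 I], by linarith⟩
    · rintro ⟨h1, h2⟩
      exact ⟨fun I => by linarith [h1 I], by linarith⟩
  rw [h1]
  simp only [polyBases, Finset.mem_filter, Finset.mem_image, Finset.mem_univ, true_and]
  constructor
  · rintro ⟨_, _, h⟩; exact h
  · rintro ⟨h2, h3⟩
    have hnn : ∀ i, 0 ≤ a i := by
      intro i
      have e1 := h2 (Finset.univ.erase i)
      have e2 := hf.2.1 (Finset.univ.erase i) Finset.univ (Finset.subset_univ _)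
      have e3 := Finset.add_sum_erase Finset.univ a (Finset.mem_univ i)
      zify at e2
      linarith
    have hle : ∀ i, a i ≤ f Finset.univ := by
      intro i
      rw [← h3]
      exact Finset.single_le_sum (fun j _ => hnn j) (Finset.mem_univ i)
    refine ⟨⟨fun i => ⟨(a i).toNat, ?_⟩, ?_⟩, hnn, h2, h3⟩
    · have := hnn i; have := hle i; omega
    · funext i; simp [hnn i]

open Classical in
lemma interior_eq (hf : IsPolymatroidRank n f) :
    interiorPoly n f = ∑ b ∈ Bs (nuOf f),
      (X : ℤ[X]) ^ (n - (Finset.univ.filter fun i => actB (nuOf f) b i).card) := by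
  have hs := nuOf_supMod hf
  refine Finset.sum_nbij' (fun a i => (f {i} : ℤ) - a i) (fun a i => (f {i} : ℤ) - a i) ?_ ?_ ?_ ?_ ?_
  · intro a ha; exact (mem_Bs hs).mpr ((mem_polyBases_s13 hf a).mp ha)
  · intro b hb; rw [mem_polyBases_s13 hf]; simpa using (mem_Bs hs).mp hb
  · intro a _; simp
  · intro a _; simp
  · intro a ha
    have : intAct n f a = Finset.univ.filter fun i =>
        actB (nuOf f) (fun i => (f {i} : ℤ) - a i) i := by
      ext i
      rw [intAct, Finset.mem_filter, Finset.mem_filter]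
      simp only [actB, Finset.mem_univ, true_and, mem_polyBases_s13 hf]
      have key : ∀ j : Fin n, (fun t => (f {t} : ℤ) - (a t - (if t = i then 1 else 0) +
          (if t = j then 1 else 0))) = shiftB (fun i => (f {i} : ℤ) - a i) i j := by
        intro j
        funext t
        simp only [shiftB]
        ring
      simp only [key]
    simp only [this]

end Transfer

section GraphPart

variable {W : Type*}

/-- functions constant along edges -/
def locConst (G : SimpleGraph W) : Submodule ℚ (W → ℚ) where
  carrier := {x | ∀ u v, G.Adj u v → x u = x v}
  add_mem' := by intro a b ha hb u v h; simp [ha u v h, hb u v h]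
  zero_mem' := by intro u v _; rfl
  smul_mem' := by intro c a ha u v h; simp [ha u v h]

lemma locConst_reach {G : SimpleGraph W} {x : W → ℚ} (hx : x ∈ locConst G) {u v : W}
    (h : G.Reachable u v) : x u = x v := by
  obtain ⟨p⟩ := h
  induction p with
  | nil => rfl
  | cons hadj _ ih => exact (hx _ _ hadj).trans ih

noncomputable def locConstEquiv (G : SimpleGraph W) :
    locConst G ≃ₗ[ℚ] (G.ConnectedComponent → ℚ) where
  toFun x c := c.lift x.1 (fun _ _ p _ => locConst_reach x.2 ⟨p⟩)
  map_add' x y := by funext c; induction c using SimpleGraph.ConnectedComponent.ind; rfl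
  map_smul' r y := by funext c; induction c using SimpleGraph.ConnectedComponent.ind; rfl
  invFun y := ⟨fun w => y (G.connectedComponentMk w), fun u v h =>
    congrArg y (SimpleGraph.ConnectedComponent.sound h.reachable)⟩
  left_inv x := by ext w; rfl
  right_inv y := by funext c; induction c using SimpleGraph.ConnectedComponent.ind; rfl

lemma finrank_locConst [Finite W] (G : SimpleGraph W) :
    Module.finrank ℚ (locConst G) = Nat.card G.ConnectedComponent := by
  classical
  have := Fintype.ofFinite W
  have := Fintype.ofFinite G.ConnectedComponent
  rw [(locConstEquiv G).finrank_eq, Module.finrank_fintype_fun_eq_card, Nat.card_eq_fintype_card]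

lemma comp_supermod [Finite W] (G G' : SimpleGraph W) :
    Nat.card G.ConnectedComponent + Nat.card G'.ConnectedComponent ≤
      Nat.card (G ⊔ G').ConnectedComponent + Nat.card (G ⊓ G').ConnectedComponent := by
  classical
  have := Fintype.ofFinite W
  simp only [← finrank_locConst]
  have h1 : locConst (G ⊔ G') = locConst G ⊓ locConst G' := by
    ext x
    simp only [Submodule.mem_inf]
    constructor
    · intro h; exact ⟨fun u v a => h u v (Or.inl a), fun u v a => h u v (Or.inr a)⟩
    · rintro ⟨h1, h2⟩ u v (a | a)
      · exact h1 u v a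
      · exact h2 u v a
  have h2 : locConst G ⊔ locConst G' ≤ locConst (G ⊓ G') := by
    refine sup_le ?_ ?_
    · intro x hx u v a; exact hx u v a.1
    · intro x hx u v a; exact hx u v a.2
  have h3 := Submodule.finrank_mono h2
  have h4 := Submodule.finrank_sup_add_finrank_inf_eq (locConst G) (locConst G')
  rw [h1]
  omega

lemma card_le_edges_add_comp [Finite W] (G : SimpleGraph W) :
    Nat.card W ≤ Nat.card G.edgeSet + Nat.card G.ConnectedComponent := by
  classical
  have := Fintype.ofFinite W
  have := Fintype.ofFinite G.edgeSet
  rw [← finrank_locConst, Nat.card_eq_fintype_card, Nat.card_eq_fintype_card]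
  let δ : (W → ℚ) →ₗ[ℚ] (G.edgeSet → ℚ) :=
    { toFun := fun x e => x e.1.out.1 - x e.1.out.2
      map_add' := by intro x y; funext e; simp; ring
      map_smul' := by intro r y; funext e; simp; ring }
  have hk : LinearMap.ker δ ≤ locConst G := by
    intro x hx u v h
    have h1 := congrFun (LinearMap.mem_ker.mp hx) ⟨s(u, v), h⟩
    have h2 : s((s(u, v) : Sym2 W).out.1, (s(u, v) : Sym2 W).out.2) = s(u, v) := Quot.out_eq _
    simp only [δ, LinearMap.coe_mk, AddHom.coe_mk, Pi.zero_apply] at h1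
    rcases Sym2.eq_iff.mp h2 with ⟨e1, e2⟩ | ⟨e1, e2⟩
    · rw [e1, e2] at h1; linarith
    · rw [e1, e2] at h1; linarith
  have h3 := Submodule.finrank_mono hk
  have h4 := LinearMap.finrank_range_add_finrank_ker δ
  have h5 := Submodule.finrank_le (LinearMap.range δ)
  simp only [Module.finrank_fintype_fun_eq_card] at h4 h5
  omega

lemma comp_lt [Finite W] {G G' : SimpleGraph W} (h : G ≤ G') {u v : W} (h1 : ¬ G.Reachable u v)
    (h2 : G'.Reachable u v) :
    Nat.card G'.ConnectedComponent < Nat.card G.ConnectedComponent := by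
  classical
  have := Fintype.ofFinite G.ConnectedComponent
  have := Fintype.ofFinite G'.ConnectedComponent
  rw [Nat.card_eq_fintype_card, Nat.card_eq_fintype_card]
  refine Fintype.card_lt_of_surjective_not_injective _
    (SimpleGraph.ConnectedComponent.surjective_map_ofLE h) ?_
  intro hinj
  have := @hinj (G.connectedComponentMk u) (G.connectedComponentMk v)
    (SimpleGraph.ConnectedComponent.sound h2)
  exact h1 (SimpleGraph.ConnectedComponent.exact this)

lemma card_edges_delete [Finite W] (G : SimpleGraph W) {e : Sym2 W} (he : e ∈ G.edgeSet) :
    Nat.card (G.deleteEdges {e}).edgeSet + 1 = Nat.card G.edgeSet := by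
  rw [SimpleGraph.edgeSet_deleteEdges]
  change (G.edgeSet \ {e}).ncard + 1 = G.edgeSet.ncard
  exact Set.ncard_sdiff_singleton_add_one he (Set.toFinite _)

lemma acyclic_edges [Finite W] (G : SimpleGraph W) (hG : G.IsAcyclic) :
    Nat.card G.edgeSet + Nat.card G.ConnectedComponent ≤ Nat.card W := by
  classical
  induction hk : Nat.card G.edgeSet generalizing G with
  | zero =>
    rw [zero_add]
    exact Nat.card_le_card_of_surjective G.connectedComponentMk
      (fun c => by induction c using SimpleGraph.ConnectedComponent.ind with | _ v => exact ⟨v, rfl⟩)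
  | succ k ih =>
    have hne : G.edgeSet.Nonempty := by
      rw [Set.nonempty_iff_ne_empty]; intro h; rw [h] at hk; simp at hk
    obtain ⟨e, he⟩ := hne
    have hbr := SimpleGraph.isAcyclic_iff_forall_isBridge.mp hG he
    have h1 := card_edges_delete G he
    have h2 := ih (G.deleteEdges {e}) (hG.anti (SimpleGraph.deleteEdges_le _)) (by omega)
    induction e using Sym2.ind with
    | _ u v =>
      have h3 := comp_lt (SimpleGraph.deleteEdges_le (G := G) {s(u, v)})
        (u := u) (v := v) (SimpleGraph.isBridge_iff.mp hbr) he.reachable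
      omega

/-- deleting an edge of a cycle keeps the number of components -/
lemma comp_delete_cycle [Finite W] (G : SimpleGraph W) {u : W} {w : G.Walk u u} (hw : w.IsCycle)
    {e : Sym2 W} (he : e ∈ w.edges) :
    Nat.card (G.deleteEdges {e}).ConnectedComponent = Nat.card G.ConnectedComponent := by
  classical
  rw [← finrank_locConst, ← finrank_locConst]
  suffices hle : locConst (G.deleteEdges {e}) = locConst G by rw [hle]
  have heG := w.edges_subset_edgeSet he
  have hnb : ¬ G.IsBridge e := fun hb => hb.notMem_edges_of_isCycle hw he
  induction e using Sym2.ind with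
  | _ a b =>
    have hr : (G.deleteEdges {s(a, b)}).Reachable a b := by
      by_contra hcon; exact hnb (SimpleGraph.isBridge_iff.mpr hcon)
    apply le_antisymm
    · intro x hx u v huv
      by_cases h : s(u, v) = s(a, b)
      · rcases Sym2.eq_iff.mp h with ⟨h1, h2⟩ | ⟨h1, h2⟩
        · rw [h1, h2]; exact locConst_reach hx hr
        · rw [h1, h2]; exact (locConst_reach hx hr).symm
      · exact hx u v (by rw [SimpleGraph.deleteEdges_adj]; exact ⟨huv, by simpa using h⟩)
    · intro x hx u v huv
      exact hx u v (SimpleGraph.deleteEdges_le _ huv)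

lemma cycle_edges [Finite W] (G : SimpleGraph W) {u : W} {w : G.Walk u u} (hw : w.IsCycle) :
    Nat.card W + 1 ≤ Nat.card G.edgeSet + Nat.card G.ConnectedComponent := by
  have hne : w.edges ≠ [] := by
    intro h; have h1 := hw.three_le_length; rw [← w.length_edges, h] at h1; simp at h1
  obtain ⟨e, he⟩ := List.exists_mem_of_ne_nil _ hne
  have h1 := comp_delete_cycle G hw he
  have h2 := card_edges_delete G (w.edges_subset_edgeSet he)
  have h3 := card_le_edges_add_comp (G.deleteEdges {e})
  omega

lemma two_cycles [Finite W] (G : SimpleGraph W)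
    (h : Nat.card W + 2 ≤ Nat.card G.edgeSet + Nat.card G.ConnectedComponent) :
    ∃ (u₁ : W) (w₁ : G.Walk u₁ u₁) (u₂ : W) (w₂ : G.Walk u₂ u₂),
      w₁.IsCycle ∧ w₂.IsCycle ∧ {x | x ∈ w₁.edges} ≠ {x | x ∈ w₂.edges} := by
  have h1 : ¬ G.IsAcyclic := fun hG => by have := acyclic_edges G hG; omega
  simp only [SimpleGraph.IsAcyclic, not_forall, not_not] at h1
  obtain ⟨u, w, hw⟩ := h1
  have hne : w.edges ≠ [] := by
    intro h; have h1 := hw.three_le_length; rw [← w.length_edges, h] at h1; simp at h1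
  obtain ⟨e, he⟩ := List.exists_mem_of_ne_nil _ hne
  have h2 := comp_delete_cycle G hw he
  have h3 := card_edges_delete G (w.edges_subset_edgeSet he)
  have h4 : ¬ (G.deleteEdges {e}).IsAcyclic := fun hG => by have := acyclic_edges _ hG; omega
  simp only [SimpleGraph.IsAcyclic, not_forall, not_not] at h4
  obtain ⟨u', w', hw'⟩ := h4
  refine ⟨u, w, u', w'.mapLe (SimpleGraph.deleteEdges_le _), hw, hw'.mapLe _, ?_⟩
  intro heq
  have h5 : e ∈ {x | x ∈ w.edges} := he
  rw [heq] at h5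
  simp only [Set.mem_ofPred_eq, SimpleGraph.Walk.edges_mapLe_eq_edges] at h5
  have := w'.edges_subset_edgeSet h5
  simp at this

/-- components of a graph all of whose edges lie inside `s` -/
lemma comp_induce [Finite W] (G : SimpleGraph W) (s : Set W)
    (hs : ∀ u v, G.Adj u v → u ∈ s) :
    Nat.card G.ConnectedComponent =
      Nat.card (G.induce s).ConnectedComponent + Nat.card ↥sᶜ := by
  classical
  have := Fintype.ofFinite W
  rw [← finrank_locConst, ← finrank_locConst]
  let φ : locConst G ≃ₗ[ℚ] (locConst (G.induce s) × (↥sᶜ → ℚ)) :=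
    { toFun := fun x => (⟨fun w => x.1 w.1, fun u v h => x.2 _ _ h⟩, fun w => x.1 w.1)
      map_add' := by intro x y; rfl
      map_smul' := by intro r y; rfl
      invFun := fun p => ⟨fun w => if h : w ∈ s then p.1.1 ⟨w, h⟩ else p.2 ⟨w, h⟩, by
        intro u v h
        have h1 := hs u v h
        have h2 := hs v u h.symm
        simp only [h1, h2, dif_pos]
        exact p.1.2 ⟨u, h1⟩ ⟨v, h2⟩ h⟩
      left_inv := by intro x; ext w; simp
      right_inv := by
        rintro ⟨x, y⟩
        refine Prod.ext ?_ ?_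
        · ext w; simp
        · funext w; have h1 : (w : W) ∉ s := w.2; simp [h1] }
  rw [φ.finrank_eq, Module.finrank_prod, Module.finrank_fintype_fun_eq_card,
    Nat.card_eq_fintype_card]

end GraphPart

section HypPart

lemma edges_induce {W : Type*} (G : SimpleGraph W) (s : Set W)
    (hs : ∀ u v, G.Adj u v → u ∈ s) :
    Nat.card (G.induce s).edgeSet = Nat.card G.edgeSet := by
  have : G.edgeSet = Sym2.map (Subtype.val : s → W) '' (G.induce s).edgeSet := by
    ext e
    induction e using Sym2.ind with
    | _ u v =>
      constructor
      · intro h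
        have h' : G.Adj u v := h
        exact ⟨s(⟨u, hs _ _ h'⟩, ⟨v, hs _ _ h'.symm⟩), h', rfl⟩
      · rintro ⟨e', he', heq⟩
        induction e' using Sym2.ind with
        | _ a b =>
          rw [← heq]
          exact he'
  rw [this]
  exact (Set.ncard_image_of_injective _ (Sym2.map.injective Subtype.val_injective)).symm

variable {V : Type*} {m : ℕ} {E : Fin m → Finset V}

/-- `Bip 𝓗|_H`, with all other vertices added as isolated vertices. -/
def Gr (E : Fin m → Finset V) (H : Finset (Fin m)) : SimpleGraph (V ⊕ Fin m) :=
  SimpleGraph.fromRel fun x y =>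
    ∃ (v : V) (e : Fin m), e ∈ H ∧ v ∈ E e ∧ x = Sum.inl v ∧ y = Sum.inr e

lemma Gr_adj {H : Finset (Fin m)} {x y : V ⊕ Fin m} :
    (Gr E H).Adj x y ↔ ∃ (v : V) (e : Fin m), e ∈ H ∧ v ∈ E e ∧
      ((x = Sum.inl v ∧ y = Sum.inr e) ∨ (y = Sum.inl v ∧ x = Sum.inr e)) := by
  rw [Gr, SimpleGraph.fromRel_adj]
  constructor
  · rintro ⟨_, ⟨v, e, h1, h2, h3⟩ | ⟨v, e, h1, h2, h3⟩⟩
    · exact ⟨v, e, h1, h2, Or.inl h3⟩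
    · exact ⟨v, e, h1, h2, Or.inr h3⟩
  · rintro ⟨v, e, h1, h2, h3 | h3⟩
    · exact ⟨by rw [h3.1, h3.2]; simp, Or.inl ⟨v, e, h1, h2, h3⟩⟩
    · exact ⟨by rw [h3.1, h3.2]; simp, Or.inr ⟨v, e, h1, h2, h3⟩⟩

lemma Gr_univ : Gr E Finset.univ = bipGraph m E := by
  simp [Gr, bipGraph]

lemma Gr_mono {H H' : Finset (Fin m)} (h : H ⊆ H') : Gr E H ≤ Gr E H' := by
  intro x y
  rw [Gr_adj, Gr_adj]
  rintro ⟨v, e, h1, h2, h3⟩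
  exact ⟨v, e, h h1, h2, h3⟩

lemma Gr_sup (H H' : Finset (Fin m)) : Gr E (H ∪ H') = Gr E H ⊔ Gr E H' := by
  ext x y
  rw [SimpleGraph.sup_adj, Gr_adj, Gr_adj, Gr_adj]
  constructor
  · rintro ⟨v, e, h1, h2, h3⟩
    rcases Finset.mem_union.mp h1 with h | h
    · exact Or.inl ⟨v, e, h, h2, h3⟩
    · exact Or.inr ⟨v, e, h, h2, h3⟩
  · rintro (⟨v, e, h1, h2, h3⟩ | ⟨v, e, h1, h2, h3⟩)
    · exact ⟨v, e, Finset.mem_union_left _ h1, h2, h3⟩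
    · exact ⟨v, e, Finset.mem_union_right _ h1, h2, h3⟩

lemma Gr_inf (H H' : Finset (Fin m)) : Gr E (H ∩ H') = Gr E H ⊓ Gr E H' := by
  ext x y
  rw [SimpleGraph.inf_adj, Gr_adj, Gr_adj, Gr_adj]
  constructor
  · rintro ⟨v, e, h1, h2, h3⟩
    rw [Finset.mem_inter] at h1
    exact ⟨⟨v, e, h1.1, h2, h3⟩, ⟨v, e, h1.2, h2, h3⟩⟩
  · rintro ⟨⟨v, e, h1, h2, h3⟩, ⟨v', e', h1', h2', h3'⟩⟩
    have : e = e' := by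
      rcases h3 with ⟨a, b⟩ | ⟨a, b⟩ <;> rcases h3' with ⟨c, d⟩ | ⟨c, d⟩ <;> simp_all
    subst this
    exact ⟨v, e, Finset.mem_inter.mpr ⟨h1, h1'⟩, h2, h3⟩

lemma restGraph_adj {H : Finset (Fin m)} {x y : bipVerts m E H} :
    (restGraph m E H).Adj x y ↔ (Gr E H).Adj x.1 y.1 := by
  change (bipGraph m E).Adj x.1 y.1 ↔ _
  rw [← Gr_univ, Gr_adj, Gr_adj]
  have key : ∀ z : bipVerts m E H, ∀ e, z.1 = Sum.inr e → e ∈ H := by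
    rintro ⟨z, e', he', hz | ⟨v, hv, hz⟩⟩ e h
    · simp only at h; rw [hz] at h; cases h; exact he'
    · simp only at h; rw [hz] at h; cases h
  constructor
  · rintro ⟨v, e, -, h2, h3⟩
    refine ⟨v, e, ?_, h2, h3⟩
    rcases h3 with h3 | h3
    · exact key y e h3.2
    · exact key x e h3.2
  · rintro ⟨v, e, -, h2, h3⟩
    exact ⟨v, e, Finset.mem_univ _, h2, h3⟩

lemma restGraph_eq (H : Finset (Fin m)) :
    restGraph m E H = (Gr E H).induce (bipVerts m E H) := by
  ext x y
  exact restGraph_adj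

lemma Gr_mem {H : Finset (Fin m)} (u v : V ⊕ Fin m) (h : (Gr E H).Adj u v) :
    u ∈ bipVerts m E H := by
  obtain ⟨v, e, h1, h2, h3 | h3⟩ := Gr_adj.mp h
  · exact ⟨e, h1, Or.inr ⟨v, h2, h3.1⟩⟩
  · exact ⟨e, h1, Or.inl h3.2⟩

lemma edges_Gr (H : Finset (Fin m)) : Nat.card (Gr E H).edgeSet = ∑ e ∈ H, (E e).card := by
  classical
  have : (Gr E H).edgeSet = (fun p : (Σ _ : Fin m, V) => (s(Sum.inl p.2, Sum.inr p.1) :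
      Sym2 (V ⊕ Fin m))) '' ((H.sigma E : Finset (Σ _ : Fin m, V)) : Set (Σ _ : Fin m, V)) := by
    ext e
    induction e using Sym2.ind with
    | _ u v =>
      rw [SimpleGraph.mem_edgeSet, Gr_adj]
      constructor
      · rintro ⟨v, e, h1, h2, ⟨rfl, rfl⟩ | ⟨rfl, rfl⟩⟩
        · exact ⟨⟨e, v⟩, by simp [h1, h2], rfl⟩
        · exact ⟨⟨e, v⟩, by simp [h1, h2], Sym2.eq_swap⟩
      · rintro ⟨⟨e, v⟩, h1, h2⟩
        simp at h1
        refine ⟨v, e, h1.1, h1.2, ?_⟩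
        rcases Sym2.eq_iff.mp h2 with ⟨a, b⟩ | ⟨a, b⟩
        · exact Or.inl ⟨a.symm, b.symm⟩
        · exact Or.inr ⟨a.symm, b.symm⟩
  rw [this]
  change Set.ncard _ = _
  rw [Set.ncard_image_of_injective, Set.ncard_coe_finset, Finset.card_sigma]
  rintro ⟨e, v⟩ ⟨e', v'⟩ h
  simp at h
  obtain ⟨rfl, rfl⟩ := h
  rfl

lemma card_bipVerts [DecidableEq V] (H : Finset (Fin m)) :
    Nat.card (bipVerts m E H) = (H.biUnion E).card + H.card := by
  have : bipVerts m E H = Sum.inl '' (↑(H.biUnion E) : Set V) ∪ Sum.inr '' (↑H : Set (Fin m)) := by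
    ext x
    simp only [bipVerts, Set.mem_union, Set.mem_image]
    constructor
    · rintro ⟨e, he, rfl | ⟨v, hv, rfl⟩⟩
      · exact Or.inr ⟨e, he, rfl⟩
      · exact Or.inl ⟨v, by simp; exact ⟨e, he, hv⟩, rfl⟩
    · rintro (⟨v, hv, rfl⟩ | ⟨e, he, rfl⟩)
      · simp at hv
        obtain ⟨e, he, hv⟩ := hv
        exact ⟨e, he, Or.inr ⟨v, hv, rfl⟩⟩
      · exact ⟨e, he, Or.inl rfl⟩
  rw [this]
  change Set.ncard _ = _
  rw [Set.ncard_union_eq, Set.ncard_image_of_injective _ Sum.inl_injective,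
    Set.ncard_image_of_injective _ Sum.inr_injective, Set.ncard_coe_finset, Set.ncard_coe_finset]
  · rw [Set.disjoint_left]
    rintro x ⟨v, _, rfl⟩ ⟨e, _, h⟩
    cases h

/-- the inclusion homomorphism -/
def restHom (E : Fin m → Finset V) (H : Finset (Fin m)) : restGraph m E H →g Gr E H :=
  ⟨Subtype.val, fun h => restGraph_adj.mp h⟩

lemma restHom_inj (H : Finset (Fin m)) : Function.Injective (restHom E H) :=
  Subtype.val_injective

lemma walk_count {H : Finset (Fin m)} {u v : V ⊕ Fin m} (p : (Gr E H).Walk u v) :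
    2 * p.support.tail.countP Sum.isRight + u.isRight.toNat = p.length + v.isRight.toNat := by
  induction p with
  | nil => simp
  | @cons u w v h p ih =>
    have h1 : w.isRight.toNat + u.isRight.toNat = 1 := by
      obtain ⟨v', e', h1, h2, ⟨rfl, rfl⟩ | ⟨rfl, rfl⟩⟩ := Gr_adj.mp h <;> simp
    rw [SimpleGraph.Walk.support_cons, List.tail_cons, SimpleGraph.Walk.length_cons]
    have h2 : p.support.countP Sum.isRight =
        p.support.tail.countP Sum.isRight + w.isRight.toNat := by
      conv_lhs => rw [← p.cons_tail_support, List.countP_cons]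
      cases w <;> simp
    omega

lemma mem_of_support {H : Finset (Fin m)} {u : V ⊕ Fin m} {p : (Gr E H).Walk u u} (hp : p.IsCycle)
    {e : Fin m} (hx : (Sum.inr e : V ⊕ Fin m) ∈ p.support) : e ∈ H := by
  obtain ⟨ed, hed, hxe⟩ :=
    (SimpleGraph.Walk.mem_support_iff_exists_mem_edges_of_not_nil hp.not_nil).mp hx
  have h1 := p.edges_subset_edgeSet hed
  obtain ⟨y, rfl⟩ := hxe
  obtain ⟨v', e', h1, h2, h3 | h3⟩ := Gr_adj.mp h1
  · simp at h3
  · have := h3.2; simp at this; subst this; exact h1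

open Classical in
lemma cycle_length {H : Finset (Fin m)} {u : V ⊕ Fin m} {p : (Gr E H).Walk u u} (hp : p.IsCycle) :
    p.length = 2 * (H.filter fun e => (Sum.inr e : V ⊕ Fin m) ∈ p.support).card := by
  have h1 := walk_count p
  have h2 : p.support.tail.countP Sum.isRight =
      (H.filter fun e => (Sum.inr e : V ⊕ Fin m) ∈ p.support).card := by
    rw [List.countP_eq_length_filter, ← List.toFinset_card_of_nodup (hp.support_nodup.filter _),
      ← Finset.card_map (s := H.filter fun e => (Sum.inr e : V ⊕ Fin m) ∈ p.support)
        (Function.Embedding.inr : Fin m ↪ V ⊕ Fin m)]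
    refine congrArg Finset.card ?_
    ext x
    simp only [List.mem_toFinset, List.mem_filter, Finset.mem_map, Finset.mem_filter]
    have hmem : ∀ x, x ∈ p.support.tail ↔ x ∈ p.support := by
      intro x
      constructor
      · exact List.mem_of_mem_tail
      · intro hx
        rw [← p.cons_tail_support, List.mem_cons] at hx
        rcases hx with rfl | hx
        · exact SimpleGraph.Walk.end_mem_tail_support hp.not_nil
        · exact hx
    rw [hmem]
    constructor
    · rintro ⟨hx, hr⟩
      cases x with
      | inl v => simp at hr
      | inr e =>
        refine ⟨e, ⟨?_, hx⟩, rfl⟩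
        exact mem_of_support hp hx
    · rintro ⟨e, ⟨he, hx⟩, rfl⟩
      exact ⟨hx, rfl⟩
  omega

variable [Fintype V]

/-- cyclomatic number of `Bip 𝓗|_H` -/
noncomputable def nu (E : Fin m → Finset V) (H : Finset (Fin m)) : ℤ :=
  (Nat.card (Gr E H).edgeSet : ℤ) + Nat.card (Gr E H).ConnectedComponent -
    Nat.card (V ⊕ Fin m)

lemma nu_rest (H : Finset (Fin m)) : nu E H =
    (Nat.card (restGraph m E H).edgeSet : ℤ) + Nat.card (restGraph m E H).ConnectedComponent -
    Nat.card (bipVerts m E H) := by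
  classical
  rw [restGraph_eq, edges_induce _ _ Gr_mem, nu, comp_induce _ _ Gr_mem]
  have h1 : Nat.card (bipVerts m E H) + Nat.card ↥(bipVerts m E H)ᶜ = Nat.card (V ⊕ Fin m) :=
    Set.ncard_add_ncard_compl _
  push_cast
  omega

lemma comp_le_union [DecidableEq V] (hne : ∀ e : Fin m, (E e).Nonempty) (H : Finset (Fin m)) :
    compCount m E H ≤ (H.biUnion E).card := by
  classical
  have hmem : ∀ v : ↥(H.biUnion E), (Sum.inl v.1 : V ⊕ Fin m) ∈ bipVerts m E H := by
    rintro ⟨v, hv⟩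
    obtain ⟨e, he, hv⟩ := Finset.mem_biUnion.mp hv
    exact ⟨e, he, Or.inr ⟨v, hv, rfl⟩⟩
  have hsurj : Function.Surjective (fun v : ↥(H.biUnion E) =>
      (restGraph m E H).connectedComponentMk ⟨_, hmem v⟩) := by
    intro c
    induction c using SimpleGraph.ConnectedComponent.ind with
    | _ x =>
      obtain ⟨x, e, he, rfl | ⟨v, hv, rfl⟩⟩ := x
      · obtain ⟨v, hv⟩ := hne e
        refine ⟨⟨v, Finset.mem_biUnion.mpr ⟨e, he, hv⟩⟩, ?_⟩
        refine SimpleGraph.ConnectedComponent.sound (SimpleGraph.Adj.reachable ?_)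
        rw [restGraph_adj, Gr_adj]
        exact ⟨v, e, he, hv, Or.inl ⟨rfl, rfl⟩⟩
      · exact ⟨⟨v, Finset.mem_biUnion.mpr ⟨e, he, hv⟩⟩, rfl⟩
  have := Nat.card_le_card_of_surjective _ hsurj
  rw [Nat.card_eq_fintype_card (α := ↥(H.biUnion E)), Fintype.card_coe] at this
  exact this

lemma mu_eq [DecidableEq V] (hne : ∀ e : Fin m, (E e).Nonempty) (H : Finset (Fin m)) :
    (muRank m E H : ℤ) = (∑ e ∈ H, ((E e).card : ℤ)) - H.card - nu E H := by
  have h1 := comp_le_union hne H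
  rw [nu_rest, card_bipVerts, restGraph_eq, edges_induce _ _ Gr_mem, edges_Gr, ← restGraph_eq]
  rw [muRank]
  rw [compCount] at *
  push_cast [Nat.cast_sub h1]
  ring

lemma nu_singleton (e : Fin m) : nu E {e} = 0 := by
  classical
  rw [nu_rest, card_bipVerts, restGraph_eq, edges_induce _ _ Gr_mem, edges_Gr, ← restGraph_eq]
  have hin : (Sum.inr e : V ⊕ Fin m) ∈ bipVerts m E {e} := ⟨e, by simp, Or.inl rfl⟩
  have hc : Nat.card (restGraph m E {e}).ConnectedComponent = 1 := by
    rw [Nat.card_eq_one_iff_unique]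
    refine ⟨⟨?_⟩, ⟨(restGraph m E {e}).connectedComponentMk ⟨_, hin⟩⟩⟩
    have key : ∀ x : bipVerts m E {e}, (restGraph m E {e}).Reachable x ⟨_, hin⟩ := by
      rintro ⟨x, e', he', hx⟩
      rw [Finset.mem_singleton] at he'
      subst he'
      rcases hx with rfl | ⟨v, hv, rfl⟩
      · exact SimpleGraph.Reachable.refl _
      · refine SimpleGraph.Adj.reachable ?_
        rw [restGraph_adj, Gr_adj]
        exact ⟨v, e', by simp, hv, Or.inl ⟨rfl, rfl⟩⟩
    intro c c'
    induction c using SimpleGraph.ConnectedComponent.ind with | _ x =>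
    induction c' using SimpleGraph.ConnectedComponent.ind with | _ y =>
    exact SimpleGraph.ConnectedComponent.sound ((key x).trans (key y).symm)
  rw [hc]
  simp

lemma nuOf_mu [DecidableEq V] (hne : ∀ e : Fin m, (E e).Nonempty) : nuOf (muRank m E) = nu E := by
  funext H
  simp only [nuOf, mu_eq hne, nu_singleton]
  simp [Finset.sum_sub_distrib]

lemma nu_supermod (I J : Finset (Fin m)) : nu E I + nu E J ≤ nu E (I ∪ J) + nu E (I ∩ J) := by
  classical
  have h1 := comp_supermod (Gr E I) (Gr E J)
  rw [← Gr_sup, ← Gr_inf] at h1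
  have h2 := Finset.sum_union_inter (s₁ := I) (s₂ := J) (f := fun e => (E e).card)
  simp only [nu, edges_Gr]
  zify at h1 h2
  push_cast
  linarith

lemma mu_rank [DecidableEq V] (hne : ∀ e : Fin m, (E e).Nonempty) :
    IsPolymatroidRank m (muRank m E) := by
  refine ⟨by simp [muRank], ?_, ?_⟩
  · intro I J hIJ
    have key : ∀ e, ∀ K : Finset (Fin m), muRank m E K ≤ muRank m E (insert e K) := by
      intro e K
      by_cases he : e ∈ K
      · rw [Finset.insert_eq_of_mem he]
      · zify
        rw [mu_eq hne, mu_eq hne, nu, nu, edges_Gr, edges_Gr, Finset.sum_insert he,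
          Finset.sum_insert he, Finset.card_insert_of_notMem he]
        obtain ⟨v, hv⟩ := hne e
        have := comp_lt (Gr_mono (E := E) (Finset.subset_insert e K)) (u := Sum.inr e)
          (v := Sum.inl v) ?_ ?_
        · push_cast; linarith [(by exact_mod_cast this : (Nat.card (Gr E (insert e K)).ConnectedComponent : ℤ) + 1 ≤ Nat.card (Gr E K).ConnectedComponent)]
        · rintro ⟨p⟩
          cases p with
          | cons h _ =>
            obtain ⟨v', e', h1, h2, h3 | h3⟩ := Gr_adj.mp h
            · simp at h3
            · have := h3.2; simp at this; subst this; exact he h1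
        · refine SimpleGraph.Adj.reachable (Gr_adj.mpr ⟨v, e, by simp, hv, Or.inr ⟨rfl, rfl⟩⟩)
    have key2 : ∀ K : Finset (Fin m), muRank m E I ≤ muRank m E (I ∪ K) := by
      intro K
      induction K using Finset.induction_on with
      | empty => simp
      | insert a s _ ih => rw [Finset.union_insert]; exact ih.trans (key _ _)
    have := key2 J
    rwa [Finset.union_eq_right.mpr hIJ] at this
  · intro I J
    zify
    simp only [mu_eq hne]
    have h1 := nu_supermod (E := E) I J
    have h2 := Finset.sum_union_inter (s₁ := I) (s₂ := J) (f := fun e => ((E e).card : ℤ))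
    have h3 := Finset.card_union_add_card_inter I J
    zify at h3
    linarith

lemma nu_univ (hconn : (bipGraph m E).Connected)
    (g : ℕ) (hg : g + m + Fintype.card V = (∑ e : Fin m, (E e).card) + 1) :
    nu E Finset.univ = g := by
  have hc : Nat.card (bipGraph m E).ConnectedComponent = 1 := by
    rw [Nat.card_eq_one_iff_unique]
    have := hconn.nonempty
    exact ⟨hconn.preconnected.subsingleton_connectedComponent, inferInstance⟩
  rw [nu, edges_Gr, Gr_univ, hc, Nat.card_sum, Nat.card_eq_fintype_card]
  simp
  zify at hg
  linarith


lemma exists_cycle_of_nu {H : Finset (Fin m)} (h : 0 < nu E H) :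
    ∃ (u : bipVerts m E H) (w : (restGraph m E H).Walk u u), w.IsCycle := by
  rw [nu_rest] at h
  have h1 : ¬ (restGraph m E H).IsAcyclic := fun hG => by
    have := acyclic_edges _ hG
    omega
  simp only [SimpleGraph.IsAcyclic, not_forall, not_not] at h1
  exact h1

lemma twoCycles_of_nu {H : Finset (Fin m)} (h : 2 ≤ nu E H) : hasTwoCycles m E H := by
  rw [nu_rest] at h
  exact two_cycles _ (by omega)

lemma nu_pos_of_Gr_cycle {H : Finset (Fin m)} {u : V ⊕ Fin m} {p : (Gr E H).Walk u u}
    (hp : p.IsCycle) : 0 < nu E H := by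
  have := cycle_edges _ hp
  rw [nu]
  omega

lemma nu_erase_pos {H : Finset (Fin m)} {u : V ⊕ Fin m} {p : (Gr E H).Walk u u}
    (hp : p.IsCycle) {e : Fin m} (he : (Sum.inr e : V ⊕ Fin m) ∉ p.support) :
    0 < nu E (H.erase e) := by
  have hed : ∀ ed ∈ p.edges, ed ∈ (Gr E (H.erase e)).edgeSet := by
    intro ed hed
    have h1 := p.edges_subset_edgeSet hed
    induction ed using Sym2.ind with
    | _ x y =>
      have hx := p.fst_mem_support_of_mem_edges hed
      have hy := p.snd_mem_support_of_mem_edges hed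
      rw [SimpleGraph.mem_edgeSet, Gr_adj] at h1 ⊢
      obtain ⟨v, e', h1, h2, h3⟩ := h1
      refine ⟨v, e', Finset.mem_erase.mpr ⟨?_, h1⟩, h2, h3⟩
      rintro rfl
      rcases h3 with h3 | h3
      · rw [h3.2] at hy; exact he hy
      · rw [h3.2] at hx; exact he hx
  exact nu_pos_of_Gr_cycle (hp.transfer hed)

lemma bipVerts_mono {H H' : Finset (Fin m)} (h : H ⊆ H') : bipVerts m E H ⊆ bipVerts m E H' := by
  rintro x ⟨e, he, hx⟩
  exact ⟨e, h he, hx⟩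

lemma hypCj_eq {k : ℕ} (hk : ∀ H : Finset (Fin m), H.card ≤ k → ¬ hasTwoCycles m E H)
    {j : ℕ} (hj : j ≤ k) : hypCj m E j = circs (nu E) j := by
  classical
  ext H
  simp only [hypCj, circs, Finset.mem_filter, Finset.mem_univ, true_and]
  refine and_congr_right fun hH => ?_
  have hle : nu E H ≤ 1 := by
    by_contra hcon
    exact hk H (by omega) (twoCycles_of_nu (by omega))
  constructor
  · rintro ⟨u, w, hw, hlen, huniq⟩
    have hw' := hw.map (restHom_inj (E := E) H)
    have hpos := nu_pos_of_Gr_cycle hw'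
    refine ⟨by omega, fun e he => ?_⟩
    by_contra hne
    have hge : 0 ≤ nu E (H.erase e) := by
      have := card_le_edges_add_comp (Gr E (H.erase e))
      rw [nu]; omega
    obtain ⟨u1, w1, hw1⟩ := exists_cycle_of_nu (lt_of_le_of_ne hge (Ne.symm hne))
    -- all hyperedges are visited by `w`
    have hl := cycle_length hw'
    rw [SimpleGraph.Walk.length_map, hlen] at hl
    have hfil : (H.filter fun e => (Sum.inr e : V ⊕ Fin m) ∈ (w.map (restHom E H)).support) = H :=
      Finset.eq_of_subset_of_card_le (Finset.filter_subset _ _) (by omega)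
    rw [← hfil, Finset.mem_filter] at he
    have hes := he.2
    rw [SimpleGraph.Walk.support_map, List.mem_map] at hes
    obtain ⟨x, hx, hxe⟩ := hes
    obtain ⟨ed, hed, hxed⟩ :=
      (SimpleGraph.Walk.mem_support_iff_exists_mem_edges_of_not_nil hw.not_nil).mp hx
    let ι : restGraph m E (H.erase e) →g restGraph m E H :=
      ⟨Set.inclusion (bipVerts_mono (Finset.erase_subset e H)), fun h => h⟩
    have hι : Function.Injective ι :=
      Set.inclusion_injective (bipVerts_mono (Finset.erase_subset e H))
    have heq := huniq _ (w1.map ι) (hw1.map hι)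
    have hed2 : ed ∈ {x | x ∈ (w1.map ι).edges} := by rw [heq]; exact hed
    have hx2 : x ∈ (w1.map ι).support :=
      (SimpleGraph.Walk.mem_support_iff_exists_mem_edges_of_not_nil (hw1.map hι).not_nil).mpr
        ⟨ed, hed2, hxed⟩
    rw [SimpleGraph.Walk.support_map, List.mem_map] at hx2
    obtain ⟨y, _, rfl⟩ := hx2
    obtain ⟨y, e', he', hy⟩ := y
    have hxe' : y = Sum.inr e := hxe
    rcases hy with hy | ⟨v, _, hy⟩
    · rw [hy] at hxe'; cases hxe'; simp at he'
    · rw [hy] at hxe'; cases hxe'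
  · rintro ⟨h1, h2⟩
    obtain ⟨u, w, hw⟩ := exists_cycle_of_nu (E := E) (H := H) (by omega)
    have hw' := hw.map (restHom_inj (E := E) H)
    refine ⟨u, w, hw, ?_, ?_⟩
    · have hl := cycle_length hw'
      rw [SimpleGraph.Walk.length_map] at hl
      rw [hl, Finset.filter_true_of_mem, hH]
      intro e he
      by_contra hcon
      have := nu_erase_pos hw' hcon
      rw [h2 e he] at this
      omega
    · intro u' w' hw'
      by_contra hcon
      exact hk H (by omega) ⟨u', w', u, w, hw', hw, hcon⟩

end HypPart

/-- For a connected hypergraph `𝓗 = (V, E)`, with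
`g = ∑_{e ∈ E} deg_{Bip 𝓗}(e) - |E| - |V| + 1`, and every
`0 ≤ i < r'_2(𝓗) = min{|H'| : Bip 𝓗|_{H'} contains at least 2 cycles}`, the coefficient of
`x^i` in the interior polynomial of `𝓗` equals
`C(g+i-1, i) - ∑_{j=0}^{i} C(g+i-1-j, i-j) * |C_j(𝓗)|`. -/
theorem stmt13 {V : Type*} [Fintype V] [DecidableEq V] (m : ℕ) (E : Fin m → Finset V)
    (hne : ∀ e : Fin m, (E e).Nonempty) (hconn : (bipGraph m E).Connected)
    (g : ℕ) (hg : g + m + Fintype.card V = (∑ e : Fin m, (E e).card) + 1)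
    (i : ℕ)
    (hi : i < sInf {c | ∃ H' : Finset (Fin m), hasTwoCycles m E H' ∧ c = H'.card}) :
    (interiorPoly m (muRank m E)).coeff i =
      ((g + i - 1).choose i : ℤ) -
        ∑ j ∈ Finset.range (i + 1),
          ((g + i - 1 - j).choose (i - j) : ℤ) * ((hypCj m E j).card : ℤ) := by
  
  classical
  have hk : ∀ H : Finset (Fin m), H.card ≤ i → ¬ hasTwoCycles m E H := by
    intro H hH h2
    have : sInf {c | ∃ H' : Finset (Fin m), hasTwoCycles m E H' ∧ c = H'.card} ≤ H.card :=
      Nat.sInf_le ⟨H, h2, rfl⟩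
    omega
  have hne2 : {c | ∃ H' : Finset (Fin m), hasTwoCycles m E H' ∧ c = H'.card}.Nonempty :=
    Nat.nonempty_of_pos_sInf (by omega)
  obtain ⟨_, H0, ⟨u, w, _, _, hw, _, _⟩, _⟩ := hne2
  have hpos := nu_pos_of_Gr_cycle (hw.map (restHom_inj (E := E) H0))
  have hf := mu_rank hne
  have hs := nuOf_supMod hf
  rw [interior_eq hf]
  rw [nuOf_mu hne] at hs ⊢
  have hgu := nu_univ hconn g hg
  have hmono := hs.mono (Finset.subset_univ H0)
  rw [coeff_formula hs (k := i) (g := g) ?_ hgu (by omega)]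
  · congr 1
    refine Finset.sum_congr rfl fun j hj => ?_
    rw [hypCj_eq hk (by simpa [Nat.lt_succ_iff] using hj)]
  · intro H hH
    by_contra hcon
    exact hk H hH (twoCycles_of_nu (by omega))
end
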